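/- For any integers m ≥ 1, n₁,…,n_m ≥ 1 and k ≥ ℓ ≥ 1, the ℓ-party discrepancy of the XOR of m independent instances of set disjointness satisfies disc_ℓ(⊕_{i=1}^m DISJ_{n_i,k}, ⊗_{i=1}^m σ_{n_i,k,ℓ}) ≤ (2^ℓ − 1)^{m/2} · (C(k,1) + C(k,2) + ⋯ + C(k,ℓ))^{m/2} / √(n₁·n₂·⋯·n_m). -/

import Mathlib

open Finset

/-- Set disjointness: `DISJ_{n,k}(X) = 1` iff `X` has no all-ones row. -/
def DISJ (n k : ℕ) (X : Fin n → Fin k → Bool) : Bool :=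
  decide (∀ i, ∃ j, X i j = false)

/-- Hamming weight of `u ∈ {0,1}^k`. -/
def wt {k : ℕ} (u : Fin k → Bool) : ℕ :=
  (Finset.univ.filter (fun j => u j = true)).card

/-- The weight, under the uniform distribution on
`{u ∈ {0,1}^k : k−ℓ ≤ |u| ≤ k−1}`, of a row `u`. -/
noncomputable def rowWtL (k ℓ : ℕ) (u : Fin k → Bool) : ℝ :=
  if k - ℓ ≤ wt u ∧ wt u ≤ k - 1 then
    (1 : ℝ) /
      (Finset.univ.filter (fun v : Fin k → Bool => k - ℓ ≤ wt v ∧ wt v ≤ k - 1)).card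
  else 0

/-- `σ⁰_{n,k,ℓ}`: each of the `n` rows is independent and uniform on
`{u ∈ {0,1}^k : k−ℓ ≤ |u| ≤ k−1}`. -/
noncomputable def sigma0L (n k ℓ : ℕ) (X : Fin n → Fin k → Bool) : ℝ :=
  ∏ i : Fin n, rowWtL k ℓ (X i)

/-- `σ¹_{n,k,ℓ}`: a uniformly random row is set to `1^k` and the remaining rows are
independent and uniform on `{u ∈ {0,1}^k : k−ℓ ≤ |u| ≤ k−1}`. -/
noncomputable def sigma1L (n k ℓ : ℕ) (X : Fin n → Fin k → Bool) : ℝ :=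
  (1 / (n : ℝ)) *
    ∑ i₀ : Fin n,
      if ∀ j, X i₀ j = true then ∏ i ∈ Finset.univ.erase i₀, rowWtL k ℓ (X i) else 0

/-- `σ_{n,k,ℓ} = ½σ⁰_{n,k,ℓ} + ½σ¹_{n,k,ℓ}`. -/
noncomputable def sigmaL (n k ℓ : ℕ) (X : Fin n → Fin k → Bool) : ℝ :=
  (sigma0L n k ℓ X + sigma1L n k ℓ X) / 2

/-- `χ` is an `S`-cylinder intersection on tuples `(X₁,…,X_m)` of Boolean matrices
`X_i ∈ {0,1}^{n_i×k}`: a product over `j ∈ S` of `{0,1}`-valued functions `φ j`,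
where `φ j` does not depend on the `j`-th columns of `X₁,…,X_m`. -/
def IsCylinderT {m : ℕ} (nn : Fin m → ℕ) (k : ℕ) (S : Finset (Fin k))
    (χ : (∀ i, Fin (nn i) → Fin k → Bool) → ℝ) : Prop :=
  ∃ φ : Fin k → ((∀ i, Fin (nn i) → Fin k → Bool) → ℝ),
    (∀ j ∈ S, ∀ X, φ j X = 0 ∨ φ j X = 1) ∧
    (∀ j ∈ S, ∀ X Y, (∀ i i' j', j' ≠ j → X i i' j' = Y i i' j') → φ j X = φ j Y) ∧
    (∀ X, χ X = ∏ j ∈ S, φ j X)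

/-- The `ℓ`-discrepancy (maximum over `S ⊆ {1,…,k}` with `|S| ≤ ℓ` of the
`S`-discrepancy) of a Boolean function `F` on tuples of matrices, w.r.t. `μ`. -/
noncomputable def discTL {m : ℕ} (nn : Fin m → ℕ) (k ℓ : ℕ)
    (F : (∀ i, Fin (nn i) → Fin k → Bool) → Bool)
    (μ : (∀ i, Fin (nn i) → Fin k → Bool) → ℝ) : ℝ :=
  sSup {t : ℝ | ∃ S : Finset (Fin k), ∃ χ : (∀ i, Fin (nn i) → Fin k → Bool) → ℝ,
    S.card ≤ ℓ ∧ IsCylinderT nn k S χ ∧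
    t = |∑ X : ∀ i, Fin (nn i) → Fin k → Bool,
          (if F X then (-1 : ℝ) else 1) * μ X * χ X|}


open Finset

namespace XD

/-- fibre of a labelling -/
def fib {ι L : Type} [Fintype ι] [DecidableEq L] (lab : ι → L) (o : L) : Finset ι :=
  univ.filter (fun i => lab i = o)

/-- block measure -/
noncomputable def Vg {ι β : Type} [DecidableEq ι] (d r : β → ℝ) (R : Finset ι) (t : ℝ)
    (X : ι → β) : ℝ :=
  t * (∑ i ∈ R, ∏ j ∈ R, (if j = i then d (X j) else r (X j))) - ∏ j ∈ R, r (X j)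

noncomputable def Tot {ι μ β : Type} [Fintype ι] [DecidableEq ι] [Fintype μ] [DecidableEq μ]
    [Fintype β] (d r : β → ℝ) (lab : ι → Option μ)
    (w : ι → β → ℝ) (t : μ → ℝ) (χ : (ι → β) → ℝ) : ℝ :=
  ∑ X : ι → β, (∏ i ∈ fib lab none, w i (X i)) *
    (∏ b, Vg d r (fib lab (some b)) (t b) X) * χ X

/-- Abstract bound. -/
def Bd {β : Type} [Fintype β] (d r : β → ℝ)
    (cyl : ∀ ι : Type, ((ι → β) → ℝ) → Prop) (ok : ℕ → ℝ → Prop) (F : ℕ → ℝ → ℝ) : Prop :=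
  ∀ (ι μ : Type) [Fintype ι] [DecidableEq ι] [Fintype μ] [DecidableEq μ]
    (lab : ι → Option μ) (w : ι → β → ℝ) (t : μ → ℝ) (χ : (ι → β) → ℝ),
    (∀ i x, 0 ≤ w i x) → cyl ι χ → (∀ b, ok (fib lab (some b)).card (t b)) →
    |Tot d r lab w t χ| ≤ (∏ i ∈ fib lab none, ∑ x, w i x) *
      ∏ b, F (fib lab (some b)).card (t b)

lemma factor {ι L γ : Type} [Fintype ι] [DecidableEq ι] [Fintype L] [DecidableEq L] [Fintype γ]
    (lab : ι → L) (g : ∀ o, ({i // lab i = o} → γ) → ℝ) :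
    ∑ z : ι → γ, ∏ o, g o (fun i => z i) = ∏ o, ∑ y, g o y := by
  rw [Fintype.prod_sum]
  let e : (ι → γ) ≃ (∀ o, ({i // lab i = o} → γ)) :=
    { toFun := fun z o i => z i
      invFun := fun y i => y (lab i) ⟨i, rfl⟩
      left_inv := fun z => rfl
      right_inv := fun y => by
        funext o ⟨i, hi⟩
        subst hi
        rfl }
  exact Equiv.sum_comp e (fun y => ∏ o, g o (y o))

lemma Vg_subtype {ι β : Type} [DecidableEq ι] (d r : β → ℝ) (R : Finset ι) (t : ℝ)
    (X : ι → β) (p : ι → Prop) [Fintype {i // p i}] (h : ∀ x, x ∈ R ↔ p x) :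
    Vg d r R t X = Vg d r (univ : Finset {i // p i}) t (fun i => X i) := by
  unfold Vg
  rw [Finset.prod_subtype R h, Finset.sum_subtype R h]
  congr 2
  refine Finset.sum_congr rfl fun i _ => ?_
  rw [Finset.prod_subtype R h]
  refine Finset.prod_congr rfl fun j _ => ?_
  simp [Subtype.ext_iff]

lemma Vg_empty {ι β : Type} [DecidableEq ι] (d r : β → ℝ) (t : ℝ)
    (X : ι → β) : Vg d r ∅ t X = -1 := by simp [Vg]

lemma prod_opt {ι μ : Type} [Fintype ι] [Fintype μ] [DecidableEq μ]
    (lab : ι → Option μ) (g : ι → ℝ) :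
    ∏ i, g i = (∏ i ∈ fib lab none, g i) * ∏ b, ∏ i ∈ fib lab (some b), g i := by
  rw [← Finset.prod_fiberwise univ lab g, Fintype.prod_option]
  rfl

/-- refined labelling -/
def lab2 {ι μ : Type} (lab : ι → Option μ) (tag : μ → ι → Option Bool) (i : ι) :
    Option (μ × Bool) :=
  (lab i).bind (fun b => (tag b i).map (fun s => (b, s)))

lemma lab2_some {ι μ : Type} [Fintype ι] [DecidableEq μ]
    (lab : ι → Option μ) (tag : μ → ι → Option Bool) (b : μ) (s : Bool) :
    fib (lab2 lab tag) (some (b, s)) = (fib lab (some b)).filter (fun i => tag b i = some s) := by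
  ext i
  simp only [fib, lab2, mem_filter, mem_univ, true_and, Option.bind_eq_some_iff,
    Option.map_eq_some_iff, Prod.mk.injEq]
  constructor
  · rintro ⟨a, h1, s', h2, rfl, rfl⟩; exact ⟨h1, h2⟩
  · rintro ⟨h1, h2⟩; exact ⟨b, h1, s, h2, rfl, rfl⟩

lemma lab2_none {ι μ : Type} [Fintype ι] [Fintype μ] [DecidableEq μ]
    (lab : ι → Option μ) (tag : μ → ι → Option Bool) (g : ι → ℝ) :
    ∏ i ∈ fib (lab2 lab tag) none, g i = (∏ i ∈ fib lab none, g i) *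
      ∏ b, ∏ i ∈ (fib lab (some b)).filter (fun i => tag b i = none), g i := by
  unfold fib
  rw [Finset.prod_filter, prod_opt lab]
  congr 1
  · refine Finset.prod_congr rfl fun i hi => ?_
    simp only [mem_filter, mem_univ, true_and] at hi
    simp [lab2, hi]
  · refine Finset.prod_congr rfl fun b _ => ?_
    rw [Finset.prod_filter]
    refine Finset.prod_congr rfl fun i hi => ?_
    simp only [mem_filter, mem_univ, true_and] at hi
    simp [lab2, hi]

lemma atoms {β : Type} [Fintype β] {d r : β → ℝ}
    {cyl : ∀ ι : Type, ((ι → β) → ℝ) → Prop} {ok : ℕ → ℝ → Prop} {F : ℕ → ℝ → ℝ}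
    (hB : Bd d r cyl ok F)
    {ι μ A : Type} [Fintype ι] [DecidableEq ι] [Fintype μ] [DecidableEq μ] [Fintype A]
    (lab : ι → Option μ) (w : ι → β → ℝ) (χ : (ι → β) → ℝ)
    (hw : ∀ i x, 0 ≤ w i x) (hχ : cyl ι χ)
    (coef : μ → A → ℝ) (u : μ → A → ι → β → ℝ) (tag : μ → A → ι → Option Bool)
    (t : μ → A → Bool → ℝ) (hu : ∀ b a i x, 0 ≤ u b a i x)
    (ht : ∀ b a s, ok ((fib lab (some b)).filter (fun i => tag b a i = some s)).card (t b a s)) :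
    |∑ X : ι → β, (∏ i ∈ fib lab none, w i (X i)) *
      (∏ b, ∑ a, coef b a *
        (∏ i ∈ (fib lab (some b)).filter (fun i => tag b a i = none), u b a i (X i)) *
        ∏ s, Vg d r ((fib lab (some b)).filter (fun i => tag b a i = some s)) (t b a s) X) * χ X|
    ≤ (∏ i ∈ fib lab none, ∑ x, w i x) * ∏ b, ∑ a, |coef b a| *
        (∏ i ∈ (fib lab (some b)).filter (fun i => tag b a i = none), ∑ x, u b a i x) *
        ∏ s, F ((fib lab (some b)).filter (fun i => tag b a i = some s)).card (t b a s) := by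
  have key : ∀ a : μ → A,
    |∑ X : ι → β, (∏ i ∈ fib lab none, w i (X i)) *
      (∏ b, (coef b (a b) *
        (∏ i ∈ (fib lab (some b)).filter (fun i => tag b (a b) i = none), u b (a b) i (X i)) *
        ∏ s, Vg d r ((fib lab (some b)).filter (fun i => tag b (a b) i = some s))
          (t b (a b) s) X)) * χ X|
    ≤ (∏ i ∈ fib lab none, ∑ x, w i x) * ∏ b, (|coef b (a b)| *
        (∏ i ∈ (fib lab (some b)).filter (fun i => tag b (a b) i = none), ∑ x, u b (a b) i x) *
        ∏ s, F ((fib lab (some b)).filter (fun i => tag b (a b) i = some s)).card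
          (t b (a b) s)) := by
    intro a
    set tg : μ → ι → Option Bool := fun b => tag b (a b) with htg
    set w' : ι → β → ℝ := fun i => match lab i with
      | none => w i
      | some b => u b (a b) i with hw'
    have hn : ∀ i ∈ fib lab none, w' i = w i := by
      intro i hi
      simp only [fib, mem_filter, mem_univ, true_and] at hi
      simp [hw', hi]
    have hs : ∀ b, ∀ i ∈ fib lab (some b), w' i = u b (a b) i := by
      intro b i hi
      simp only [fib, mem_filter, mem_univ, true_and] at hi
      simp [hw', hi]
    have h := hB ι (μ × Bool) (lab2 lab tg) w' (fun bs => t bs.1 (a bs.1) bs.2) χ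
      (by
        intro i x
        simp only [hw']
        cases lab i with
        | none => exact hw i x
        | some b => exact hu b (a b) i x) hχ
      (by
        rintro ⟨b, s⟩
        rw [lab2_some]
        exact ht b (a b) s)
    unfold Tot at h
    simp only [lab2_none, Fintype.prod_prod_type, lab2_some] at h
    have e1 : ∀ X : ι → β, (∏ i ∈ fib lab none, w' i (X i)) = ∏ i ∈ fib lab none, w i (X i) :=
      fun X => Finset.prod_congr rfl fun i hi => by rw [hn i hi]
    have e2 : ∀ X : ι → β, ∀ b,
        (∏ i ∈ (fib lab (some b)).filter (fun i => tg b i = none), w' i (X i)) =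
        ∏ i ∈ (fib lab (some b)).filter (fun i => tg b i = none), u b (a b) i (X i) :=
      fun X b => Finset.prod_congr rfl fun i hi => by rw [hs b i (Finset.mem_filter.1 hi).1]
    have e3 : (∏ i ∈ fib lab none, ∑ x, w' i x) = ∏ i ∈ fib lab none, ∑ x, w i x :=
      Finset.prod_congr rfl fun i hi => by rw [hn i hi]
    have e4 : ∀ b,
        (∏ i ∈ (fib lab (some b)).filter (fun i => tg b i = none), ∑ x, w' i x) =
        ∏ i ∈ (fib lab (some b)).filter (fun i => tg b i = none), ∑ x, u b (a b) i x :=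
      fun b => Finset.prod_congr rfl fun i hi => by rw [hs b i (Finset.mem_filter.1 hi).1]
    simp only [e1, e2, e3, e4] at h
    have e5 := mul_le_mul_of_nonneg_left h
      (Finset.prod_nonneg (fun b (_ : b ∈ (univ : Finset μ)) => abs_nonneg (coef b (a b))))
    rw [← Finset.abs_prod, ← abs_mul, Finset.mul_sum] at e5
    refine le_trans (le_of_eq ?_) (e5.trans (le_of_eq ?_))
    · refine congrArg abs (Finset.sum_congr rfl fun X _ => ?_)
      simp only [Finset.prod_mul_distrib, htg]
      ring
    · simp only [Finset.prod_mul_distrib, Finset.abs_prod, htg]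
      ring
  simp only [Fintype.prod_sum, Finset.mul_sum, Finset.sum_mul]
  rw [Finset.sum_comm]
  refine (Finset.abs_sum_le_sum_abs _ _).trans ?_
  exact Finset.sum_le_sum fun a _ => key a

end XD

open Finset

namespace XD

noncomputable def rho {β : Type} [DecidableEq β] (U : Finset β) (b : β) : ℝ :=
  if b ∈ U then 1 / (U.card : ℝ) else 0

noncomputable def dl {β : Type} [DecidableEq β] (o b : β) : ℝ := if b = o then 1 else 0

noncomputable def fC (C : ℝ) (n : ℕ) : ℝ := if n = 0 then 1 else Real.sqrt (C / n)

noncomputable def Fg (C : ℝ) (n : ℕ) (t : ℝ) : ℝ := t * Real.sqrt (C * n) + |t * n - 1|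

lemma rho_nonneg {β : Type} [DecidableEq β] (U : Finset β) (b : β) : 0 ≤ rho U b := by
  unfold rho; split_ifs <;> positivity

lemma sum_rho {β : Type} [DecidableEq β] [Fintype β] (U : Finset β) (hU : U.Nonempty) :
    ∑ b, rho U b = 1 := by
  unfold rho
  rw [← Finset.sum_filter]
  have : (0 : ℝ) < U.card := by exact_mod_cast hU.card_pos
  simp
  field_simp

/-- the bound -/
def PP {β : Type} [DecidableEq β] [Fintype β] (U : Finset β) (o : β)
    (cyl : ∀ ι : Type, ((ι → β) → ℝ) → Prop) (C : ℝ) : Prop :=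
  Bd (dl o) (rho U) cyl (fun n t => t = 1 / (n : ℝ)) (fun n _ => fC C n)

def PG {β : Type} [DecidableEq β] [Fintype β] (U : Finset β) (o : β)
    (cyl : ∀ ι : Type, ((ι → β) → ℝ) → Prop) (C : ℝ) : Prop :=
  Bd (dl o) (rho U) cyl (fun _ t => 0 ≤ t) (fun n t => Fg C n t)

lemma Vg_gen {ι β : Type} [DecidableEq ι] (d r : β → ℝ) (R : Finset ι) (t : ℝ) (X : ι → β) :
    Vg d r R t X = (t * R.card) * Vg d r R (1 / (R.card : ℝ)) X +
      (t * R.card - 1) * ∏ j ∈ R, r (X j) := by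
  rcases R.eq_empty_or_nonempty with rfl | h
  · simp [Vg]
  · have : (0 : ℝ) < R.card := by exact_mod_cast h.card_pos
    unfold Vg
    field_simp
    ring

lemma PP_PG {β : Type} [DecidableEq β] [Fintype β] {U : Finset β} {o : β}
    {cyl : ∀ ι : Type, ((ι → β) → ℝ) → Prop} {C : ℝ} (hC : 0 ≤ C) (hU : U.Nonempty)
    (h : PP U o cyl C) : PG U o cyl C := by
  intro ι μ _ _ _ _ lab w t χ hw hχ ht
  have key := atoms h (A := Bool) lab w χ hw hχ
    (fun b a => if a then -(t b * (fib lab (some b)).card) else (t b * (fib lab (some b)).card - 1))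
    (fun b a i => rho U) (fun b a i => if a then some true else none)
    (fun b a s => if a = true ∧ s = true then 1 / ((fib lab (some b)).card : ℝ) else 0)
    (fun b a i x => rho_nonneg U x)
    (by
      intro b a s
      cases a <;> cases s <;> simp)
  unfold Tot
  have e1 : ∀ (X : ι → β) b, Vg (dl o) (rho U) (fib lab (some b)) (t b) X =
      ∑ a : Bool, (if a then -(t b * (fib lab (some b)).card)
          else (t b * (fib lab (some b)).card - 1)) *
        (∏ i ∈ (fib lab (some b)).filter
          (fun i => (if a = true then some true else none : Option Bool) = none), rho U (X i)) *
        ∏ s, Vg (dl o) (rho U) ((fib lab (some b)).filter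
          (fun i => (if a = true then some true else none : Option Bool) = some s))
          (if a = true ∧ s = true then 1 / ((fib lab (some b)).card : ℝ) else 0) X := by
    intro X b
    rw [Vg_gen]
    simp [Vg_empty]
    ring
  simp only [e1]
  refine key.trans ?_
  refine mul_le_mul_of_nonneg_left ?_
    (Finset.prod_nonneg fun i _ => Finset.sum_nonneg fun x _ => hw i x)
  refine Finset.prod_le_prod (fun b _ => ?_) (fun b _ => ?_)
  · refine Finset.sum_nonneg fun a _ => mul_nonneg (mul_nonneg (abs_nonneg _) ?_) ?_
    · exact Finset.prod_nonneg fun i _ => Finset.sum_nonneg fun x _ => rho_nonneg U x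
    · refine Finset.prod_nonneg fun s _ => ?_
      unfold fC
      split_ifs <;> positivity
  · have e2 : ∀ n : ℕ, (n : ℝ) * fC C n = Real.sqrt (C * n) := by
      intro n
      unfold fC
      split_ifs with hn
      · simp [hn]
      · have : (0 : ℝ) < n := by positivity
        rw [show C * n = (n : ℝ) ^ 2 * (C / n) by field_simp, Real.sqrt_mul (by positivity),
          Real.sqrt_sq this.le]
    have ht' : 0 ≤ t b := ht b
    have e3 : fC C 0 = 1 := by simp [fC]
    simp only [Fintype.sum_bool, Fintype.prod_bool, sum_rho U hU]
    unfold Fg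
    rw [← e2]
    simp [e3, abs_of_nonneg ht']
    ring_nf
    rfl

/-! second moments -/

lemma prod_ite_sum {κ γ : Type} [Fintype κ] [DecidableEq κ] [Fintype γ] (p : κ → γ → ℝ) :
    ∑ z : κ → γ, ∏ j, p j (z j) = ∏ j, ∑ c, p j c := (Fintype.prod_sum p).symm

lemma first_moment {κ γ : Type} [Fintype κ] [DecidableEq κ] [Fintype γ] (p h : γ → ℝ)
    (hp : ∑ c, p c = 1) :
    ∑ z : κ → γ, (∏ j, p (z j)) * ∑ j, h (z j) = Fintype.card κ * ∑ c, p c * h c := by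
  simp only [Finset.mul_sum]
  rw [Finset.sum_comm]
  rw [← Finset.mul_sum]
  have : ∀ i : κ, ∑ z : κ → γ, (∏ j, p (z j)) * h (z i) = ∑ c, p c * h c := by
    intro i
    have e : ∀ z : κ → γ, (∏ j, p (z j)) * h (z i) =
        ∏ j, (p (z j) * if j = i then h (z j) else 1) := by
      intro z
      rw [Finset.prod_mul_distrib, Finset.prod_ite_eq' univ i]
      simp
    simp only [e]
    rw [prod_ite_sum (fun j c => p c * if j = i then h c else 1),
      Finset.prod_eq_single i]
    · simp
    · intro j _ hj; simp [hj, hp]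
    · simp
  simp [this]

lemma second_moment {κ γ : Type} [Fintype κ] [DecidableEq κ] [Fintype γ] (p g : γ → ℝ)
    (hp : ∑ c, p c = 1) (hg : ∑ c, p c * g c = 0) :
    ∑ z : κ → γ, (∏ j, p (z j)) * (∑ j, g (z j)) ^ 2 =
      Fintype.card κ * ∑ c, p c * g c ^ 2 := by
  have e0 : ∀ z : κ → γ, (∏ j, p (z j)) * (∑ j, g (z j)) ^ 2 =
      ∑ i, ∑ i', (∏ j, p (z j)) * (g (z i) * g (z i')) := by
    intro z
    rw [sq, Finset.sum_mul_sum, Finset.mul_sum]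
    simp only [Finset.mul_sum]
  simp only [e0]
  rw [Finset.sum_comm]
  have : ∀ i : κ, ∑ z : κ → γ, ∑ i', (∏ j, p (z j)) * (g (z i) * g (z i')) =
      ∑ c, p c * g c ^ 2 := by
    intro i
    rw [Finset.sum_comm, Finset.sum_eq_single i]
    · have e : ∀ z : κ → γ, (∏ j, p (z j)) * (g (z i) * g (z i)) =
        ∏ j, (p (z j) * if j = i then g (z j) ^ 2 else 1) := by
        intro z
        rw [Finset.prod_mul_distrib, Finset.prod_ite_eq' univ i]
        simp [sq]
      simp only [e]
      rw [prod_ite_sum (fun j c => p c * if j = i then g c ^ 2 else 1),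
        Finset.prod_eq_single i]
      · simp
      · intro j _ hj; simp [hj, hp]
      · simp
    · intro i' _ hi'
      have e : ∀ z : κ → γ, (∏ j, p (z j)) * (g (z i) * g (z i')) =
        ∏ j, (p (z j) * ((if j = i then g (z j) else 1) * if j = i' then g (z j) else 1)) := by
        intro z
        rw [Finset.prod_mul_distrib, Finset.prod_mul_distrib, Finset.prod_ite_eq' univ i,
          Finset.prod_ite_eq' univ i']
        simp
      simp only [e]
      rw [prod_ite_sum (fun j c => p c * ((if j = i then g c else 1) * if j = i' then g c else 1))]
      exact Finset.prod_eq_zero (Finset.mem_univ i) (by simp [hi'.symm, hg])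
    · simp
  simp [this]

/-- marginal -/
noncomputable def lam {β : Type} [DecidableEq β] (U : Finset (β × Bool)) (x : β) : ℝ :=
  rho U (x, true) + rho U (x, false)

lemma lam_nonneg {β : Type} [DecidableEq β] (U : Finset (β × Bool)) (x : β) : 0 ≤ lam U x :=
  add_nonneg (rho_nonneg _ _) (rho_nonneg _ _)

lemma sum_lam {β : Type} [DecidableEq β] [Fintype β] (U : Finset (β × Bool)) (hU : U.Nonempty) :
    ∑ x, lam U x = 1 := by
  rw [← sum_rho U hU, Fintype.sum_prod_type]
  simp [lam]

lemma lam_o {β : Type} [DecidableEq β] (U : Finset (β × Bool)) (o : β)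
    (h1 : (o, true) ∉ U) (h2 : (o, false) ∈ U) : lam U o = 1 / (U.card : ℝ) := by
  simp [lam, rho, h1, h2]

lemma base_block {κ β : Type} [Fintype κ] [DecidableEq κ] [DecidableEq β] [Fintype β]
    (U : Finset (β × Bool)) (o : β) (h1 : (o, true) ∉ U) (h2 : (o, false) ∈ U) :
    ∑ x : κ → β, |∑ y : κ → Bool, Vg (dl (o, true)) (rho U) univ (1 / (Fintype.card κ : ℝ))
      (fun i => (x i, y i))| ≤ fC ((U.card : ℝ) - 1) (Fintype.card κ) := by
  have hU : U.Nonempty := ⟨_, h2⟩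
  have hN : (0 : ℝ) < U.card := by exact_mod_cast hU.card_pos
  set N : ℝ := (U.card : ℝ) with hNdef
  set n : ℝ := (Fintype.card κ : ℝ) with hn
  have e1 : ∀ x : κ → β, ∑ y : κ → Bool, Vg (dl (o, true)) (rho U) univ (1 / n)
      (fun i => (x i, y i)) = (∏ j, lam U (x j)) *
        ((1 / n) * (∑ j, N * dl o (x j)) - 1) := by
    intro x
    unfold Vg
    rw [Finset.sum_sub_distrib, ← Finset.mul_sum, Finset.sum_comm]
    rw [prod_ite_sum (fun j c => rho U (x j, c))]
    have a1 : ∀ j, ∑ c : Bool, rho U (x j, c) = lam U (x j) := by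
      intro j; simp [lam]
    have a2 : ∀ i, ∑ y : κ → Bool, ∏ j, (if j = i then dl (o, true) (x j, y j)
        else rho U (x j, y j)) = (∏ j, lam U (x j)) * (N * dl o (x i)) := by
      intro i
      rw [prod_ite_sum (fun j c => if j = i then dl (o, true) (x j, c) else rho U (x j, c))]
      have a3 : ∀ j, ∑ c : Bool, (if j = i then dl (o, true) (x j, c) else rho U (x j, c)) =
          lam U (x j) * (if j = i then N * dl o (x j) else 1) := by
        intro j
        by_cases hj : j = i
        · simp only [hj, if_true]
          by_cases hx : x i = o
          · rw [hx, lam_o U o h1 h2]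
            simp [dl]
            rw [← hNdef]
            field_simp
          · simp [dl, hx]
        · simp [hj, lam]
      simp only [a3]
      rw [Finset.prod_mul_distrib, Finset.prod_ite_eq' univ i]
      simp
    simp only [a1, a2]
    rw [← Finset.mul_sum]
    ring
  simp only [e1]
  rcases Nat.eq_zero_or_pos (Fintype.card κ) with h0 | hpos
  · haveI : IsEmpty κ := Fintype.card_eq_zero_iff.1 h0
    simp [fC]
  have hn0 : 0 < n := by rw [hn]; exact_mod_cast hpos
  have e2 : ∀ x : κ → β, |(∏ j, lam U (x j)) * ((1 / n) * (∑ j, N * dl o (x j)) - 1)| =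
      (∏ j, lam U (x j)) * ((1 / n) * |∑ j, (N * dl o (x j) - 1)|) := by
    intro x
    rw [abs_mul, abs_of_nonneg (Finset.prod_nonneg fun j _ => lam_nonneg U (x j))]
    congr 1
    rw [← abs_of_pos (show 0 < 1 / n by positivity), ← abs_mul, abs_of_pos (show 0 < 1 / n by positivity)]
    congr 1
    rw [Finset.sum_sub_distrib]
    simp
    rw [← hn]
    field_simp
  simp only [e2]
  have hs := sum_lam U hU
  have hdl : ∑ c, lam U c * (N * dl o c) = 1 := by
    rw [Finset.sum_eq_single o]
    · rw [lam_o U o h1 h2]; simp [dl]; rw [← hNdef]; field_simp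
    · intro c _ hc; simp [dl, hc]
    · simp
  have hdl2 : ∑ c, lam U c * (N * dl o c) ^ 2 = N := by
    rw [Finset.sum_eq_single o]
    · rw [lam_o U o h1 h2]; simp [dl]; rw [← hNdef]; field_simp
    · intro c _ hc; simp [dl, hc]
    · simp
  have sm := second_moment (κ := κ) (lam U) (fun c => N * dl o c - 1) hs (by
    simp only [mul_sub, Finset.sum_sub_distrib, hdl, mul_one, hs]; ring)
  have sm2 : ∑ c, lam U c * (N * dl o c - 1) ^ 2 = N - 1 := by
    have : ∀ c, lam U c * (N * dl o c - 1) ^ 2 = lam U c * (N * dl o c) ^ 2 -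
      2 * (lam U c * (N * dl o c)) + lam U c := by intro c; ring
    simp only [this, Finset.sum_add_distrib, Finset.sum_sub_distrib, ← Finset.mul_sum, hdl, hdl2, hs]
    ring
  rw [sm2] at sm
  rw [fC, if_neg hpos.ne']
  apply Real.le_sqrt_of_sq_le
  have cs := Finset.sum_sq_le_sum_mul_sum_of_sq_le_mul (R := ℝ) (univ : Finset (κ → β))
    (r := fun x => (∏ j, lam U (x j)) * ((1 / n) * |∑ j, (N * dl o (x j) - 1)|))
    (f := fun x => ∏ j, lam U (x j))
    (g := fun x => (∏ j, lam U (x j)) * ((1 / n) ^ 2 * (∑ j, (N * dl o (x j) - 1)) ^ 2))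
    (fun x _ => Finset.prod_nonneg fun j _ => lam_nonneg U (x j))
    (fun x _ => mul_nonneg (Finset.prod_nonneg fun j _ => lam_nonneg U (x j)) (by positivity))
    (fun x _ => by
      rw [mul_pow, mul_pow, sq_abs]; apply le_of_eq; ring)
  refine cs.trans (le_of_eq ?_)
  rw [prod_ite_sum (fun j c => lam U c)]
  have : ∀ x : κ → β, (∏ j, lam U (x j)) * ((1 / n) ^ 2 * (∑ j, (N * dl o (x j) - 1)) ^ 2) =
    (1 / n) ^ 2 * ((∏ j, lam U (x j)) * (∑ j, (N * dl o (x j) - 1)) ^ 2) := by intro x; ring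
  simp only [this, ← Finset.mul_sum, sm, hs]
  rw [← hn]
  simp
  field_simp

/-- splitting rows into a pair of functions -/
lemma sum_split {ι β γ : Type} [Fintype ι] [DecidableEq ι] [Fintype β] [Fintype γ]
    (f : (ι → β × γ) → ℝ) :
    ∑ X, f X = ∑ x : ι → β, ∑ y : ι → γ, f (fun i => (x i, y i)) := by
  rw [← Fintype.sum_prod_type (f := fun p : (ι → β) × (ι → γ) => f (fun i => (p.1 i, p.2 i)))]
  exact (Equiv.sum_comp (Equiv.arrowProdEquivProdArrow ι (fun _ => β) (fun _ => γ)).symm f).symm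

lemma card_fib {ι L : Type} [Fintype ι] [DecidableEq L] (lab : ι → L) (o : L) :
    (fib lab o).card = Fintype.card {i // lab i = o} := by
  rw [Fintype.card_subtype]; rfl

lemma mem_fib {ι L : Type} [Fintype ι] [DecidableEq L] (lab : ι → L) (o : L) (x : ι) :
    x ∈ fib lab o ↔ lab x = o := by simp [fib]

lemma base {β : Type} [DecidableEq β] [Fintype β]
    (U : Finset (β × Bool)) (o : β) (h1 : (o, true) ∉ U) (h2 : (o, false) ∈ U)
    (cyl : ∀ ι : Type, ((ι → β × Bool) → ℝ) → Prop)
    (hc : ∀ ι χ, cyl ι χ → ∃ φ : (ι → β) → ℝ, (∀ x, |φ x| ≤ 1) ∧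
      ∀ X, χ X = φ (fun i => (X i).1)) :
    PP U (o, true) cyl ((U.card : ℝ) - 1) := by
  intro ι μ _ _ _ _ lab w t χ hw hχ ht
  obtain ⟨φ, hφ, hχφ⟩ := hc ι χ hχ
  unfold Tot
  rw [sum_split]
  simp only [hχφ, ← Finset.sum_mul]
  let g : ∀ ob : Option μ, ({i // lab i = ob} → β × Bool) → ℝ := fun ob => match ob with
    | none => fun X => ∏ i, w i.1 (X i)
    | some b => fun X => Vg (dl (o, true)) (rho U) univ (t b) X
  have e1 : ∀ X : ι → β × Bool, (∏ i ∈ fib lab none, w i (X i)) *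
      (∏ b, Vg (dl (o, true)) (rho U) (fib lab (some b)) (t b) X) =
      ∏ ob, g ob (fun i => X i) := by
    intro X
    rw [Fintype.prod_option]
    congr 1
    · exact Finset.prod_subtype _ (mem_fib lab none) _
    · exact Finset.prod_congr rfl fun b _ => Vg_subtype _ _ _ _ _ _ (mem_fib lab (some b))
  simp only [e1]
  have e2 : ∀ x : ι → β, ∑ y : ι → Bool, ∏ ob, g ob (fun i => (x i, y i)) =
      ∏ ob, ∑ y : {i // lab i = ob} → Bool, g ob (fun i => (x i, y i)) := fun x =>
    factor lab (fun ob y => g ob (fun i => (x i, y i)))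
  simp only [e2]
  refine (Finset.abs_sum_le_sum_abs _ _).trans ?_
  have e3 : ∀ x : ι → β, |(∏ ob, ∑ y : {i // lab i = ob} → Bool, g ob (fun i => (x i, y i))) * φ x|
      ≤ ∏ ob, |∑ y : {i // lab i = ob} → Bool, g ob (fun i => (x i, y i))| := by
    intro x
    rw [abs_mul, Finset.abs_prod]
    exact mul_le_of_le_one_right (Finset.prod_nonneg fun _ _ => abs_nonneg _) (hφ x)
  refine (Finset.sum_le_sum fun x _ => e3 x).trans ?_
  rw [factor lab (fun ob x => |∑ y : {i // lab i = ob} → Bool, g ob (fun i => (x i, y i))|),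
    Fintype.prod_option]
  refine mul_le_mul ?_ (Finset.prod_le_prod (fun b _ => by positivity) fun b _ => ?_)
    (Finset.prod_nonneg fun b _ => by positivity)
    (Finset.prod_nonneg fun i _ => Finset.sum_nonneg fun x _ => hw i x)
  · apply le_of_eq
    rw [Finset.prod_subtype _ (mem_fib lab none)]
    have : ∀ x : {i // lab i = none} → β,
        |∑ y : {i // lab i = none} → Bool, g none (fun i => (x i, y i))| =
        ∑ y : {i // lab i = none} → Bool, g none (fun i => (x i, y i)) := fun x =>
      abs_of_nonneg (Finset.sum_nonneg fun y _ => Finset.prod_nonneg fun i _ => hw _ _)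
    simp only [this]
    rw [← sum_split (fun X => g none X)]
    exact prod_ite_sum (fun (i : {i // lab i = none}) c => w i.1 c)
  · have htb := ht b
    rw [card_fib] at htb ⊢
    simp only [g, htb]
    exact base_block U o h1 h2

end XD

open Finset

namespace XD

/-- sum over positions of products with one marked factor -/
noncomputable def Dg {ι : Type} [DecidableEq ι] (d r : ι → ℝ) (R : Finset ι) : ℝ :=
  ∑ i ∈ R, ∏ j ∈ R, (if j = i then d j else r j)

lemma Dg_insert {ι : Type} [DecidableEq ι] (d r : ι → ℝ) (R : Finset ι) (a : ι) (ha : a ∉ R) :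
    Dg d r (insert a R) = d a * (∏ j ∈ R, r j) + r a * Dg d r R := by
  unfold Dg
  rw [Finset.sum_insert ha, Finset.prod_insert ha, if_pos rfl, Finset.mul_sum]
  congr 1
  · congr 1
    refine Finset.prod_congr rfl fun j hj => ?_
    rw [if_neg]
    rintro rfl; exact ha hj
  · refine Finset.sum_congr rfl fun i hi => ?_
    rw [Finset.prod_insert ha, if_neg]
    rintro rfl; exact ha hi

lemma Dg_empty {ι : Type} [DecidableEq ι] (d r : ι → ℝ) : Dg d r ∅ = 0 := by simp [Dg]

lemma Vg_eq_Dg {ι β : Type} [DecidableEq ι] (d r : β → ℝ) (R : Finset ι) (t : ℝ) (X : ι → β) :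
    Vg d r R t X = t * Dg (fun i => d (X i)) (fun i => r (X i)) R - ∏ j ∈ R, r (X j) := rfl

lemma Dg_scale {ι : Type} [DecidableEq ι] (d r : ι → ℝ) (τ : ℝ) (R : Finset ι) :
    τ ^ R.card * Dg d r R = τ * Dg d (fun i => τ * r i) R := by
  induction R using Finset.induction_on with
  | empty => simp [Dg_empty]
  | insert a R ha ih =>
    rw [Dg_insert _ _ _ _ ha, Dg_insert _ _ _ _ ha, Finset.card_insert_of_notMem ha,
      Finset.prod_mul_distrib, Finset.prod_const]
    linear_combination (τ * r a) * ih

lemma Vg_scale {ι β : Type} [DecidableEq ι] (d r : β → ℝ) (τ : ℝ) (hτ : τ ≠ 0) (R : Finset ι)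
    (t : ℝ) (X : ι → β) :
    τ ^ R.card * Vg d r R (t / τ) X =
      t * Dg (fun i => d (X i)) (fun i => τ * r (X i)) R - ∏ j ∈ R, (τ * r (X j)) := by
  rw [Vg_eq_Dg, Finset.prod_mul_distrib, Finset.prod_const]
  have := Dg_scale (fun i => d (X i)) (fun i => r (X i)) τ R
  have h2 : t / τ * (τ ^ R.card * Dg (fun i => d (X i)) (fun i => r (X i)) R) =
      t / τ * (τ * Dg (fun i => d (X i)) (fun i => τ * r (X i)) R) := by rw [this]
  have h3 : t / τ * (τ * Dg (fun i => d (X i)) (fun i => τ * r (X i)) R) =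
    t * Dg (fun i => d (X i)) (fun i => τ * r (X i)) R := by field_simp
  linear_combination h2 + h3

lemma inv {ι : Type} [DecidableEq ι] (d r d' r' l q e nn : ι → ℝ) (tag : ι → Option Bool)
    (h1 : ∀ i, r i * r' i / l i = q i)
    (h2 : ∀ i, d i * r' i / l i = if tag i = some true then e i else 0)
    (h3 : ∀ i, r i * d' i / l i = if tag i = some false then e i else 0)
    (h4 : ∀ i, d i * d' i / l i = nn i)
    (h5 : ∀ i, tag i ≠ none → nn i = 0) (R : Finset ι) :
    (∏ i ∈ R, r i) * (∏ i ∈ R, r' i) / (∏ i ∈ R, l i) = ∏ i ∈ R, q i ∧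
    ∏ i ∈ R, q i = (∏ i ∈ R.filter (fun i => tag i = none), q i) *
      (∏ i ∈ R.filter (fun i => tag i = some true), q i) *
      (∏ i ∈ R.filter (fun i => tag i = some false), q i) ∧
    Dg d r R * (∏ i ∈ R, r' i) / (∏ i ∈ R, l i) =
      (∏ i ∈ R.filter (fun i => tag i = none), q i) *
      Dg e q (R.filter (fun i => tag i = some true)) *
      (∏ i ∈ R.filter (fun i => tag i = some false), q i) ∧
    (∏ i ∈ R, r i) * Dg d' r' R / (∏ i ∈ R, l i) =
      (∏ i ∈ R.filter (fun i => tag i = none), q i) *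
      (∏ i ∈ R.filter (fun i => tag i = some true), q i) *
      Dg e q (R.filter (fun i => tag i = some false)) ∧
    Dg d r R * Dg d' r' R / (∏ i ∈ R, l i) =
      (∏ i ∈ R.filter (fun i => tag i = none), q i) *
      Dg e q (R.filter (fun i => tag i = some true)) *
      Dg e q (R.filter (fun i => tag i = some false)) + Dg nn q R := by
  induction R using Finset.induction_on with
  | empty => simp [Dg_empty]
  | insert a R ha ih =>
    obtain ⟨i1, i2, i3, i4, i5⟩ := ih
    have hf : ∀ o, a ∉ R.filter (fun i => tag i = o) := fun o h => ha (Finset.mem_filter.1 h).1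
    have g1 := h1 a
    have g2 := h2 a
    have g3 := h3 a
    have g4 := h4 a
    have g5 := h5 a
    simp only [Dg_insert _ _ _ _ ha, Finset.prod_insert ha, Finset.filter_insert]
    set P := ∏ i ∈ R, r i
    set P' := ∏ i ∈ R, r' i
    set L := ∏ i ∈ R, l i
    set A := Dg d r R
    set A' := Dg d' r' R
    have k1 : r a * P * (r' a * P') / (l a * L) = (r a * r' a / l a) * (P * P' / L) := by
      rw [div_mul_div_comm]; ring
    have k2 : (d a * P + r a * A) * (r' a * P') / (l a * L) =
        (d a * r' a / l a) * (P * P' / L) + (r a * r' a / l a) * (A * P' / L) := by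
      rw [div_mul_div_comm, div_mul_div_comm]; ring
    have k3 : r a * P * (d' a * P' + r' a * A') / (l a * L) =
        (r a * d' a / l a) * (P * P' / L) + (r a * r' a / l a) * (P * A' / L) := by
      rw [div_mul_div_comm, div_mul_div_comm]; ring
    have k4 : (d a * P + r a * A) * (d' a * P' + r' a * A') / (l a * L) =
        (d a * d' a / l a) * (P * P' / L) + (d a * r' a / l a) * (P * A' / L) +
        (r a * d' a / l a) * (A * P' / L) + (r a * r' a / l a) * (A * A' / L) := by
      rw [div_mul_div_comm, div_mul_div_comm, div_mul_div_comm, div_mul_div_comm]; ring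
    rw [k1, k2, k3, k4, g1, g2, g3, g4, i1, i3, i4, i5]
    rcases ht : tag a with _ | s
    · simp [Dg_insert _ _ _ _ (hf _), Finset.prod_insert (hf _)]
      rw [i2]
      refine ⟨?_, ?_, ?_, ?_⟩ <;> ring
    · have g6 : nn a = 0 := g5 (by simp [ht])
      cases s
      · simp [Dg_insert _ _ _ _ (hf _), Finset.prod_insert (hf _), g6]
        rw [i2]
        refine ⟨?_, ?_, ?_, ?_⟩ <;> ring
      · simp [Dg_insert _ _ _ _ (hf _), Finset.prod_insert (hf _), g6]
        rw [i2]
        refine ⟨?_, ?_, ?_, ?_⟩ <;> ring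

noncomputable def pk {β : Type} [DecidableEq β] (U : Finset (β × Bool)) (x : β) (z : Bool × Bool) : ℝ :=
  rho U (x, z.1) * rho U (x, z.2) / lam U x

def tagz (z : Bool × Bool) : Option Bool :=
  if z = (true, false) then some true else if z = (false, true) then some false else none

def Up {β : Type} [DecidableEq β] [Fintype β] (U : Finset (β × Bool)) : Finset β :=
  univ.filter (fun x => (x, true) ∈ U ∧ (x, false) ∈ U)

noncomputable def tau {β : Type} [DecidableEq β] [Fintype β] (U : Finset (β × Bool)) : ℝ :=
  (Up U).card / (2 * U.card)

lemma pk_nonneg {β : Type} [DecidableEq β] (U : Finset (β × Bool)) (x : β) (z : Bool × Bool) :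
    0 ≤ pk U x z :=
  div_nonneg (mul_nonneg (rho_nonneg _ _) (rho_nonneg _ _)) (lam_nonneg _ _)

lemma sum_pk_z {β : Type} [DecidableEq β] (U : Finset (β × Bool)) (x : β) :
    ∑ z, pk U x z = lam U x := by
  rw [Fintype.sum_prod_type]
  simp only [pk, Fintype.sum_bool]
  by_cases h : lam U x = 0
  · simp [h]
  · field_simp; unfold lam; ring

lemma pk_tag {β : Type} [DecidableEq β] [Fintype β] (U : Finset (β × Bool)) (hU' : (Up U).Nonempty)
    (x : β) (z : Bool × Bool) (hz : tagz z ≠ none) : pk U x z = tau U * rho (Up U) x := by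
  have hN' : (0 : ℝ) < (Up U).card := by exact_mod_cast hU'.card_pos
  have hU : U.Nonempty := by
    obtain ⟨x, hx⟩ := hU'
    exact ⟨(x, true), (Finset.mem_filter.1 hx).2.1⟩
  have hN : (0 : ℝ) < U.card := by exact_mod_cast hU.card_pos
  have key : rho U (x, true) * rho U (x, false) / lam U x = tau U * rho (Up U) x := by
    unfold lam
    by_cases h1 : (x, true) ∈ U <;> by_cases h2 : (x, false) ∈ U
    · have : x ∈ Up U := by simp [Up, h1, h2]
      simp only [rho, h1, h2, this, if_true, tau]
      field_simp
      ring
    all_goals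
      have : x ∉ Up U := by simp [Up, h1, h2]
      simp [rho, h1, h2, this]
  unfold pk
  rcases z with ⟨a, b⟩
  cases a <;> cases b <;> simp [tagz] at hz
  · simpa [mul_comm] using key
  · exact key

lemma k_dr {β : Type} [DecidableEq β] (U : Finset (β × Bool)) (o : β) 
    (h1 : (o, true) ∉ U) (h2 : (o, false) ∈ U) (x : β) (z : Bool × Bool) :
    dl (o, true) (x, z.1) * rho U (x, z.2) / lam U x =
      if tagz z = some true then dl o x else 0 := by
  have hU : U.Nonempty := ⟨_, h2⟩
  have hN : (0 : ℝ) < U.card := by exact_mod_cast hU.card_pos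
  by_cases hx : x = o
  · subst hx
    rw [lam_o U x h1 h2]
    rcases z with ⟨a, b⟩
    cases a <;> cases b <;> simp [tagz, dl, rho, h1, h2]
    field_simp
  · simp [dl, hx]

lemma k_rd {β : Type} [DecidableEq β] (U : Finset (β × Bool)) (o : β) 
    (h1 : (o, true) ∉ U) (h2 : (o, false) ∈ U) (x : β) (z : Bool × Bool) :
    rho U (x, z.1) * dl (o, true) (x, z.2) / lam U x =
      if tagz z = some false then dl o x else 0 := by
  have hU : U.Nonempty := ⟨_, h2⟩
  have hN : (0 : ℝ) < U.card := by exact_mod_cast hU.card_pos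
  by_cases hx : x = o
  · subst hx
    rw [lam_o U x h1 h2]
    rcases z with ⟨a, b⟩
    cases a <;> cases b <;> simp [tagz, dl, rho, h1, h2]
    field_simp
  · simp [dl, hx]

noncomputable def nk {β : Type} [DecidableEq β] (U : Finset (β × Bool)) (o : β) (x : β)
    (z : Bool × Bool) : ℝ := if z = (true, true) then U.card * dl o x else 0

lemma nk_nonneg {β : Type} [DecidableEq β] (U : Finset (β × Bool)) (o : β) (x : β)
    (z : Bool × Bool) : 0 ≤ nk U o x z := by
  unfold nk dl; split_ifs <;> positivity

lemma k_dd {β : Type} [DecidableEq β] (U : Finset (β × Bool)) (o : β) 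
    (h1 : (o, true) ∉ U) (h2 : (o, false) ∈ U) (x : β) (z : Bool × Bool) :
    dl (o, true) (x, z.1) * dl (o, true) (x, z.2) / lam U x = nk U o x z := by
  have hU : U.Nonempty := ⟨_, h2⟩
  have hN : (0 : ℝ) < U.card := by exact_mod_cast hU.card_pos
  by_cases hx : x = o
  · subst hx
    rw [lam_o U x h1 h2]
    rcases z with ⟨a, b⟩
    cases a <;> cases b <;> simp [nk, dl]
  · simp [dl, nk, hx]

lemma H_eq {ι β : Type} [DecidableEq ι] [DecidableEq β] [Fintype β] (U : Finset (β × Bool)) (o : β)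
    (h1 : (o, true) ∉ U) (h2 : (o, false) ∈ U) (hU' : (Up U).Nonempty) (R : Finset ι) (t : ℝ)
    (x : ι → β) (z : ι → Bool × Bool) :
    Vg (dl (o, true)) (rho U) R t (fun i => (x i, (z i).1)) *
      Vg (dl (o, true)) (rho U) R t (fun i => (x i, (z i).2)) / (∏ i ∈ R, lam U (x i)) =
    (∏ s, tau U ^ (R.filter (fun i => tagz (z i) = some s)).card) *
      (∏ i ∈ R.filter (fun i => tagz (z i) = none), pk U (x i) (z i)) *
      (∏ s, Vg (dl o) (rho (Up U)) (R.filter (fun i => tagz (z i) = some s)) (t / tau U) x) +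
    t ^ 2 * Dg (fun i => nk U o (x i) (z i)) (fun i => pk U (x i) (z i)) R := by
  have hN' : (0 : ℝ) < (Up U).card := by exact_mod_cast hU'.card_pos
  have hU : U.Nonempty := ⟨_, h2⟩
  have hN : (0 : ℝ) < U.card := by exact_mod_cast hU.card_pos
  have hτ : tau U ≠ 0 := by unfold tau; positivity
  obtain ⟨i1, i2, i3, i4, i5⟩ := inv (fun i => dl (o, true) (x i, (z i).1))
    (fun i => rho U (x i, (z i).1)) (fun i => dl (o, true) (x i, (z i).2))
    (fun i => rho U (x i, (z i).2)) (fun i => lam U (x i)) (fun i => pk U (x i) (z i))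
    (fun i => dl o (x i)) (fun i => nk U o (x i) (z i)) (fun i => tagz (z i))
    (fun i => rfl) (fun i => k_dr U o h1 h2 _ _) (fun i => k_rd U o h1 h2 _ _)
    (fun i => k_dd U o h1 h2 _ _)
    (fun i hi => by
      have : z i ≠ (true, true) := by rintro h; simp [h, tagz] at hi
      simp [nk, this]) R
  have sc : ∀ s, tau U ^ (R.filter (fun i => tagz (z i) = some s)).card *
      Vg (dl o) (rho (Up U)) (R.filter (fun i => tagz (z i) = some s)) (t / tau U) x =
      t * Dg (fun i => dl o (x i)) (fun i => pk U (x i) (z i))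
        (R.filter (fun i => tagz (z i) = some s)) -
      ∏ i ∈ R.filter (fun i => tagz (z i) = some s), pk U (x i) (z i) := by
    intro s
    rw [Vg_scale _ _ _ hτ]
    have hq : ∀ j ∈ R.filter (fun i => tagz (z i) = some s),
        tau U * rho (Up U) (x j) = pk U (x j) (z j) := fun j hj =>
      (pk_tag U hU' _ _ (by rw [(Finset.mem_filter.1 hj).2]; simp)).symm
    congr 1
    · congr 1
      unfold Dg
      refine Finset.sum_congr rfl fun i _ => Finset.prod_congr rfl fun j hj => ?_
      simp only [hq j hj]
    · exact Finset.prod_congr rfl hq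
  have st := sc true
  have sf := sc false
  rw [Vg_eq_Dg, Vg_eq_Dg, Fintype.prod_bool, Fintype.prod_bool]
  set L := ∏ i ∈ R, lam U (x i)
  set PE := ∏ i ∈ R.filter (fun i => tagz (z i) = none), pk U (x i) (z i)
  set Vt := Vg (dl o) (rho (Up U)) (R.filter (fun i => tagz (z i) = some true)) (t / tau U) x
  set Vf := Vg (dl o) (rho (Up U)) (R.filter (fun i => tagz (z i) = some false)) (t / tau U) x
  set ct := tau U ^ (R.filter (fun i => tagz (z i) = some true)).card
  set cf := tau U ^ (R.filter (fun i => tagz (z i) = some false)).card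
  have e1 : ct * cf * PE * (Vt * Vf) = PE * (ct * Vt) * (cf * Vf) := by ring
  rw [e1, st, sf]
  rw [i2] at i1
  linear_combination t ^ 2 * i5 - t * i3 - t * i4 + i1

end XD

open Finset

namespace XD

noncomputable def gam {κ : Type} [DecidableEq κ] (C' τ : ℝ) (p ν : Bool × Bool → ℝ) (R : Finset κ)
    (t : ℝ) (z : κ → Bool × Bool) : ℝ :=
  (∏ j ∈ R, p (z j)) * (∏ s : Bool, Fg C' (∑ i ∈ R, if tagz (z i) = some s then 1 else 0) (t / τ)) +
    t ^ 2 * Dg (fun i => ν (z i)) (fun i => p (z i)) R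

lemma Dg_subtype {ι : Type} [DecidableEq ι] (d r : ι → ℝ) (R : Finset ι)
    (p : ι → Prop) [Fintype {i // p i}] (h : ∀ x, x ∈ R ↔ p x) :
    Dg d r R = Dg (fun i : {i // p i} => d i) (fun i => r i) univ := by
  unfold Dg
  rw [Finset.sum_subtype R h]
  refine Finset.sum_congr rfl fun i _ => ?_
  rw [Finset.prod_subtype R h]
  refine Finset.prod_congr rfl fun j _ => ?_
  simp [Subtype.ext_iff]

lemma gam_subtype {ι : Type} [DecidableEq ι] (C' τ : ℝ) (p ν : Bool × Bool → ℝ) (R : Finset ι)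
    (t : ℝ) (z : ι → Bool × Bool)
    (q : ι → Prop) [Fintype {i // q i}] (h : ∀ x, x ∈ R ↔ q x) :
    gam C' τ p ν R t z = gam C' τ p ν (univ : Finset {i // q i}) t (fun i => z i) := by
  unfold gam
  have e0 : ∏ j ∈ R, p (z j) = ∏ j : {i // q i}, p (z j) := Finset.prod_subtype R h _
  rw [Dg_subtype _ _ R q h, e0]
  have e : ∀ s : Bool, (∑ i ∈ R, if tagz (z i) = some s then 1 else 0 : ℕ) =
      ∑ i : {i // q i}, if tagz (z i) = some s then 1 else 0 :=
    fun s => Finset.sum_subtype R h _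
  simp only [e]

lemma Fg_sq (C s : ℝ) (hC : 0 ≤ C) (hs : 0 < s) (r : ℕ) (t : ℝ) :
    Fg C r t ^ 2 ≤ (1 + s) * (t ^ 2 * (C * r)) + (1 + 1 / s) * (t * r - 1) ^ 2 := by
  unfold Fg
  set b := |t * r - 1| with hb
  have hb2 : (t * r - 1) ^ 2 = b ^ 2 := (sq_abs _).symm
  set a := t * Real.sqrt (C * r) with ha
  have ha2 : t ^ 2 * (C * r) = a ^ 2 := by
    rw [ha, mul_pow, Real.sq_sqrt (by positivity)]
  rw [ha2, hb2]
  have : 0 ≤ (1 / s) * (s * a - b) ^ 2 := by positivity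
  have e : (1 / s) * (s * a - b) ^ 2 = s * a ^ 2 - 2 * a * b + (1 / s) * b ^ 2 := by
    field_simp; ring
  nlinarith

lemma block_bound {κ : Type} [Fintype κ] [DecidableEq κ] (C C' τ N s : ℝ) (hC' : 0 ≤ C')
    (hτ : 0 < τ) (hs : 0 < s) (p ν : Bool × Bool → ℝ) (hp : ∀ c, 0 ≤ p c) (hp1 : ∑ c, p c = 1)
    (hpt : ∀ c, tagz c ≠ none → p c = τ) (hν : ∑ c, ν c = N)
    (hC : N + (1 / τ) * ((1 + s) * C' + 1 + 1 / s) ≤ C) :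
    ∑ z : κ → Bool × Bool, gam C' τ p ν univ (1 / (Fintype.card κ : ℝ)) z ≤
      fC C (Fintype.card κ) ^ 2 := by
  rcases Nat.eq_zero_or_pos (Fintype.card κ) with h0 | hpos
  · have : IsEmpty κ := Fintype.card_eq_zero_iff.1 h0
    simp [fC, gam, Fg, Dg]
  set n : ℝ := (Fintype.card κ : ℝ) with hn
  have hn0 : 0 < n := by rw [hn]; exact_mod_cast hpos
  unfold gam
  rw [Finset.sum_add_distrib, ← Finset.mul_sum]
  have d1 : ∑ z : κ → Bool × Bool, Dg (fun i => ν (z i)) (fun i => p (z i)) univ = n * N := by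
    unfold Dg
    rw [Finset.sum_comm]
    have : ∀ i : κ, ∑ z : κ → Bool × Bool, ∏ j, (if j = i then ν (z j) else p (z j)) = N := by
      intro i
      rw [prod_ite_sum (fun j c => if j = i then ν c else p c), Finset.prod_eq_single i]
      · simp [hν]
      · intro j _ hj; simp [hj, hp1]
      · simp
    simp [this, hn]
  rw [d1]
  let hh : Bool → Bool × Bool → ℝ := fun s c => if tagz c = some s then 1 else 0
  let f : Bool → (κ → Bool × Bool) → ℝ := fun b z =>
    Fg C' (∑ i, if tagz (z i) = some b then 1 else 0) (1 / n / τ)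
  have hph : ∀ b, ∑ c, p c * hh b c = τ := by
    intro b
    have : ∀ c, p c * hh b c = if c = (b, !b) then τ else 0 := by
      intro c
      by_cases hc : tagz c = some b
      · have h2 : c = (b, !b) := by
          revert hc
          rcases c with ⟨c1, c2⟩
          cases c1 <;> cases c2 <;> cases b <;> simp [tagz]
        simp only [hh, if_pos hc, if_pos h2, mul_one]
        exact hpt c (by rw [hc]; simp)
      · have h2 : c ≠ (b, !b) := by
          rintro rfl
          cases b <;> simp [tagz] at hc
        simp [hh, if_neg hc, if_neg h2]
    simp [this]
  have hhsq : ∀ b c, hh b c ^ 2 = hh b c := by intro b c; simp only [hh]; split_ifs <;> simp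
  have fb : ∀ b, ∑ z : κ → Bool × Bool, (∏ j, p (z j)) * f b z ^ 2 ≤
      (1 / (n * τ)) * ((1 + s) * C' + 1 + 1 / s) := by
    intro b
    have m1 := first_moment (κ := κ) p (hh b) hp1
    have m2 := second_moment (κ := κ) p (fun c => hh b c / τ - 1) hp1 (by
      simp only [mul_sub, Finset.sum_sub_distrib, mul_one, hp1, ← mul_div_assoc,
        ← Finset.sum_div, hph]
      rw [div_self hτ.ne']; ring)
    rw [hph, ← hn] at m1
    have v : ∑ c, p c * (hh b c / τ - 1) ^ 2 = 1 / τ - 1 := by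
      have : ∀ c, p c * (hh b c / τ - 1) ^ 2 =
          (1 / τ ^ 2 - 2 / τ) * (p c * hh b c) + p c := by
        intro c
        have e : p c * (hh b c / τ - 1) ^ 2 = 1 / τ ^ 2 * (p c * hh b c ^ 2) - 2 / τ * (p c * hh b c) + p c := by
          field_simp; ring
        rw [e, hhsq]; ring
      simp only [this, Finset.sum_add_distrib, ← Finset.mul_sum, hph, hp1]
      field_simp; ring
    rw [v, ← hn] at m2
    have pt : ∀ z : κ → Bool × Bool, (∏ j, p (z j)) * f b z ^ 2 ≤
        ((1 + s) * ((1 / n / τ) ^ 2 * C')) * ((∏ j, p (z j)) * ∑ j, hh b (z j)) +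
        ((1 + 1 / s) * (1 / n) ^ 2) * ((∏ j, p (z j)) * (∑ j, (hh b (z j) / τ - 1)) ^ 2) := by
      intro z
      have h0 : 0 ≤ ∏ j, p (z j) := Finset.prod_nonneg fun j _ => hp _
      have := mul_le_mul_of_nonneg_left
        (Fg_sq C' s hC' hs (∑ i, if tagz (z i) = some b then 1 else 0) (1 / n / τ)) h0
      refine this.trans (le_of_eq ?_)
      have c1 : ((∑ i, if tagz (z i) = some b then 1 else 0 : ℕ) : ℝ) = ∑ j, hh b (z j) := by
        push_cast; rfl
      have c2 : ∑ j, (hh b (z j) / τ - 1) = (∑ j, hh b (z j)) / τ - n := by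
        rw [Finset.sum_sub_distrib, ← Finset.sum_div]; simp [hn]
      rw [c1, c2]
      field_simp
    refine (Finset.sum_le_sum fun z _ => pt z).trans ?_
    rw [Finset.sum_add_distrib, ← Finset.mul_sum, ← Finset.mul_sum, m1, m2]
    have : (1 / (n * τ)) * ((1 + s) * C' + 1 + 1 / s) - ((1 + s) * ((1 / n / τ) ^ 2 * C') * (n * τ) +
      (1 + 1 / s) * (1 / n) ^ 2 * (n * (1 / τ - 1))) = (1 + 1 / s) * (1 / n) := by
      field_simp; ring
    have h2 : 0 ≤ (1 + 1 / s) * (1 / n) := by positivity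
    linarith
  have am : ∑ z : κ → Bool × Bool, (∏ j, p (z j)) * (∏ b, f b z) ≤
      (1 / (n * τ)) * ((1 + s) * C' + 1 + 1 / s) := by
    have pt : ∀ z : κ → Bool × Bool, (∏ j, p (z j)) * (∏ b, f b z) ≤
        (1 / 2) * ((∏ j, p (z j)) * f true z ^ 2) + (1 / 2) * ((∏ j, p (z j)) * f false z ^ 2) := by
      intro z
      have h0 : 0 ≤ ∏ j, p (z j) := Finset.prod_nonneg fun j _ => hp _
      rw [Fintype.prod_bool]
      have := mul_nonneg h0 (sq_nonneg (f true z - f false z))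
      nlinarith
    refine (Finset.sum_le_sum fun z _ => pt z).trans ?_
    rw [Finset.sum_add_distrib, ← Finset.mul_sum, ← Finset.mul_sum]
    linarith [fb true, fb false]
  refine (add_le_add am le_rfl).trans ?_
  have tot : 1 / (n * τ) * ((1 + s) * C' + 1 + 1 / s) + (1 / n) ^ 2 * (n * N) =
      (N + (1 / τ) * ((1 + s) * C' + 1 + 1 / s)) / n := by field_simp; ring
  rw [tot]
  have : (N + (1 / τ) * ((1 + s) * C' + 1 + 1 / s)) / n ≤ C / n :=
    div_le_div_of_nonneg_right hC hn0.le
  refine this.trans ?_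
  rw [fC, if_neg hpos.ne']
  by_cases hc : 0 ≤ C / n
  · rw [Real.sq_sqrt hc]
  · exact (le_of_lt (not_le.1 hc)).trans (sq_nonneg _)

end XD

open Finset

namespace XD

noncomputable def pb {β : Type} [DecidableEq β] [Fintype β] (U : Finset (β × Bool))
    (z : Bool × Bool) : ℝ := ∑ x, pk U x z

noncomputable def nb {β : Type} [DecidableEq β] [Fintype β] (U : Finset (β × Bool)) (o : β)
    (z : Bool × Bool) : ℝ := ∑ x, nk U o x z

lemma pb_tag {β : Type} [DecidableEq β] [Fintype β] (U : Finset (β × Bool)) (hU' : (Up U).Nonempty)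
    (z : Bool × Bool) (hz : tagz z ≠ none) : pb U z = tau U := by
  unfold pb
  simp only [pk_tag U hU' _ z hz, ← Finset.mul_sum, sum_rho _ hU', mul_one]

lemma sum_pb {β : Type} [DecidableEq β] [Fintype β] (U : Finset (β × Bool)) (hU : U.Nonempty) :
    ∑ z, pb U z = 1 := by
  unfold pb
  rw [Finset.sum_comm]
  simp only [sum_pk_z]
  exact sum_lam U hU

lemma sum_nb {β : Type} [DecidableEq β] [Fintype β] (U : Finset (β × Bool)) (o : β) :
    ∑ z, nb U o z = U.card := by
  unfold nb nk dl
  rw [Finset.sum_comm]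
  simp

lemma prod_three {κ : Type} (R : Finset κ) (tag : κ → Option Bool) (f : κ → ℝ) :
    ∏ i ∈ R, f i = (∏ s, ∏ i ∈ R.filter (fun i => tag i = some s), f i) *
      ∏ i ∈ R.filter (fun i => tag i = none), f i := by
  rw [← Finset.prod_fiberwise R tag f, Fintype.prod_option, mul_comm]

lemma fixed_z {ι μ β : Type} [Fintype ι] [DecidableEq ι] [Fintype μ] [DecidableEq μ]
    [DecidableEq β] [Fintype β] (U : Finset (β × Bool)) (o : β)
    (h1 : (o, true) ∉ U) (h2 : (o, false) ∈ U) (hU' : (Up U).Nonempty)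
    (cyl : ∀ ι : Type, ((ι → β) → ℝ) → Prop) (C' : ℝ) (hPG : PG (Up U) o cyl C')
    (lab : ι → Option μ) (w : ι → β → ℝ) (χ : (ι → β) → ℝ)
    (hw : ∀ i x, 0 ≤ w i x) (hχ : cyl ι χ) (t : μ → ℝ) (ht : ∀ b, 0 ≤ t b)
    (z : ι → Bool × Bool) :
    |∑ x : ι → β, (∏ i ∈ fib lab none, w i (x i)) *
      (∏ b, Vg (dl (o, true)) (rho U) (fib lab (some b)) (t b) (fun i => (x i, (z i).1)) *
        Vg (dl (o, true)) (rho U) (fib lab (some b)) (t b) (fun i => (x i, (z i).2)) /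
        (∏ i ∈ fib lab (some b), lam U (x i))) * χ x| ≤
    (∏ i ∈ fib lab none, ∑ x, w i x) *
      ∏ b, gam C' (tau U) (pb U) (nb U o) (fib lab (some b)) (t b) z := by
  have hN' : (0 : ℝ) < (Up U).card := by exact_mod_cast hU'.card_pos
  have hU : U.Nonempty := ⟨_, h2⟩
  have hN : (0 : ℝ) < U.card := by exact_mod_cast hU.card_pos
  have hτ : 0 < tau U := by unfold tau; positivity
  simp only [H_eq U o h1 h2 hU']
  let coef : μ → Option ι → ℝ := fun b a => match a with
    | none => ∏ s, tau U ^ ((fib lab (some b)).filter (fun i => tagz (z i) = some s)).card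
    | some i0 => if i0 ∈ fib lab (some b) then t b ^ 2 else 0
  let u : μ → Option ι → ι → β → ℝ := fun b a i x => match a with
    | none => pk U x (z i)
    | some i0 => if i = i0 then nk U o x (z i) else pk U x (z i)
  let tag : μ → Option ι → ι → Option Bool := fun b a i => match a with
    | none => tagz (z i)
    | some _ => none
  have key := atoms hPG (A := Option ι) lab w χ hw hχ coef u tag (fun b a s => t b / tau U)
    (by
      intro b a i x
      rcases a with _ | i0
      · exact pk_nonneg _ _ _
      · simp only [u]
        split_ifs
        · exact nk_nonneg _ _ _ _
        · exact pk_nonneg _ _ _)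
    (by
      intro b a s
      exact div_nonneg (ht b) hτ.le)
  simp only [Fintype.sum_option] at key
  have c1 : ∀ (b : μ), ∀ x : ι → β, (∑ i0 : ι, coef b (some i0) *
      (∏ i ∈ (fib lab (some b)).filter (fun i => tag b (some i0) i = none), u b (some i0) i (x i)) *
      ∏ s, Vg (dl o) (rho (Up U)) ((fib lab (some b)).filter (fun i => tag b (some i0) i = some s))
        (t b / tau U) x) =
      t b ^ 2 * Dg (fun i => nk U o (x i) (z i)) (fun i => pk U (x i) (z i)) (fib lab (some b)) := by
    intro b x
    simp only [coef, tag, u]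
    simp only [Finset.filter_true, reduceCtorEq, Finset.filter_false, Vg_empty,
      Fintype.prod_bool]
    simp only [mul_neg, mul_one, neg_neg, ite_mul, zero_mul]
    rw [Finset.sum_ite_mem, Finset.univ_inter, Dg, Finset.mul_sum]
  have c2 : ∀ (b : μ), (∑ i0 : ι, |coef b (some i0)| *
      (∏ i ∈ (fib lab (some b)).filter (fun i => tag b (some i0) i = none),
        ∑ x, u b (some i0) i x) *
      ∏ s, Fg C' ((fib lab (some b)).filter (fun i => tag b (some i0) i = some s)).card
        (t b / tau U)) =
      t b ^ 2 * Dg (fun i => nb U o (z i)) (fun i => pb U (z i)) (fib lab (some b)) := by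
    intro b
    have e : ∀ i0 i, ∑ x, (if i = i0 then nk U o x (z i) else pk U x (z i)) =
      if i = i0 then nb U o (z i) else pb U (z i) := by
      intro i0 i; split_ifs <;> rfl
    have e2 : ∀ i0, |(if i0 ∈ fib lab (some b) then t b ^ 2 else 0)| =
        (if i0 ∈ fib lab (some b) then t b ^ 2 else 0) := by
      intro i0; rw [abs_of_nonneg]; split_ifs <;> positivity
    have e3 : Fg C' 0 (t b / tau U) = 1 := by simp [Fg]
    simp only [coef, tag, u, e, e2]
    simp only [Finset.filter_true, reduceCtorEq, Finset.filter_false, Finset.card_empty, e3,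
      Fintype.prod_bool]
    simp only [mul_one, ite_mul, zero_mul]
    rw [Finset.sum_ite_mem, Finset.univ_inter, Dg, Finset.mul_sum]
  simp only [c1, c2] at key
  refine key.trans (le_of_eq ?_)
  congr 1
  refine Finset.prod_congr rfl fun b _ => ?_
  unfold gam
  congr 1
  simp only [coef, u, tag]
  rw [abs_of_nonneg (Finset.prod_nonneg fun s _ => by positivity)]
  rw [prod_three (fib lab (some b)) (fun i => tagz (z i))]
  have e4 : ∀ s : Bool, (∏ i ∈ (fib lab (some b)).filter (fun i => tagz (z i) = some s), pb U (z i)) =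
      tau U ^ ((fib lab (some b)).filter (fun i => tagz (z i) = some s)).card := by
    intro s
    rw [← Finset.prod_const]
    refine Finset.prod_congr rfl fun i hi => ?_
    exact pb_tag U hU' _ (by rw [(Finset.mem_filter.1 hi).2]; simp)
  simp only [e4, Finset.card_filter]
  rfl

end XD

open Finset

namespace XD

noncomputable def wk {β : Type} (w : β × Bool → ℝ) (x : β) (z : Bool × Bool) : ℝ :=
  w (x, z.1) * w (x, z.2) / (w (x, true) + w (x, false))

lemma wk_nonneg {β : Type} (w : β × Bool → ℝ) (hw : ∀ x, 0 ≤ w x) (x : β) (z : Bool × Bool) :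
    0 ≤ wk w x z := div_nonneg (mul_nonneg (hw _) (hw _)) (add_nonneg (hw _) (hw _))

lemma sum_wk {β : Type} [Fintype β] (w : β × Bool → ℝ) :
    ∑ z, ∑ x, wk w x z = ∑ X, w X := by
  rw [Finset.sum_comm, Fintype.sum_prod_type]
  refine Finset.sum_congr rfl fun x _ => ?_
  rw [Fintype.sum_prod_type]
  simp only [wk, Fintype.sum_bool]
  by_cases h : w (x, true) + w (x, false) = 0
  · simp [h]
  · field_simp

lemma Vg_zero {ι β : Type} [DecidableEq ι] (d r : β → ℝ) (R : Finset ι) (t : ℝ) (X : ι → β)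
    (i : ι) (hi : i ∈ R) (hd : d (X i) = 0) (hr : r (X i) = 0) : Vg d r R t X = 0 := by
  unfold Vg
  rw [Finset.prod_eq_zero hi hr, Finset.sum_eq_zero]
  · simp
  · intro i' _
    apply Finset.prod_eq_zero hi
    split_ifs <;> assumption

lemma step {β : Type} [DecidableEq β] [Fintype β] (U : Finset (β × Bool)) (o : β)
    (h1 : (o, true) ∉ U) (h2 : (o, false) ∈ U) (hU' : (Up U).Nonempty)
    (cyl : ∀ ι : Type, ((ι → β) → ℝ) → Prop) (C' C s : ℝ) (hPG : PG (Up U) o cyl C')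
    (hC' : 0 ≤ C') (hs : 0 < s)
    (hC : (U.card : ℝ) + (1 / tau U) * ((1 + s) * C' + 1 + 1 / s) ≤ C)
    (cylp : ∀ ι : Type, ((ι → β × Bool) → ℝ) → Prop)
    (hc : ∀ ι χ, cylp ι χ → ∃ (φ : (ι → β) → ℝ) (ψ : (ι → Bool) → (ι → β) → ℝ),
      (∀ x, |φ x| ≤ 1) ∧ (∀ y y', cyl ι (fun x => ψ y x * ψ y' x)) ∧
      ∀ X, χ X = φ (fun i => (X i).1) * ψ (fun i => (X i).2) (fun i => (X i).1)) :
    PP U (o, true) cylp C := by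
  intro ι μ _ _ _ _ lab w t χ hw hχ ht
  obtain ⟨φ, ψ, hφ, hψ, hχφ⟩ := hc ι χ hχ
  have hN' : (0 : ℝ) < (Up U).card := by exact_mod_cast hU'.card_pos
  have hU : U.Nonempty := ⟨_, h2⟩
  have hN : (0 : ℝ) < U.card := by exact_mod_cast hU.card_pos
  have hτ : 0 < tau U := by unfold tau; positivity
  have ht0 : ∀ b, 0 ≤ t b := fun b => by
    have : t b = _ := ht b
    rw [this]; positivity
  have hfC : ∀ n, 0 ≤ fC C n := by
    intro n; unfold fC; split_ifs <;> positivity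
  have hm : 0 ≤ ∏ i ∈ fib lab none, ∑ x, w i x :=
    Finset.prod_nonneg fun i _ => Finset.sum_nonneg fun x _ => hw i x
  refine abs_le_of_sq_le_sq ?_ (mul_nonneg hm (Finset.prod_nonneg fun b _ => hfC _))
  let F : (ι → β) → (ι → Bool) → ℝ := fun x y => (∏ i ∈ fib lab none, w i (x i, y i)) *
    (∏ b, Vg (dl (o, true)) (rho U) (fib lab (some b)) (t b) (fun i => (x i, y i)))
  let Lam : (ι → β) → ℝ := fun x => (∏ i ∈ fib lab none, (w i (x i, true) + w i (x i, false))) *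
    ∏ b, ∏ i ∈ fib lab (some b), lam U (x i)
  have hLam : ∀ x, 0 ≤ Lam x := fun x => mul_nonneg
    (Finset.prod_nonneg fun i _ => add_nonneg (hw _ _) (hw _ _))
    (Finset.prod_nonneg fun b _ => Finset.prod_nonneg fun i _ => lam_nonneg _ _)
  have hF0 : ∀ x, Lam x = 0 → ∀ y, F x y = 0 := by
    intro x hx y
    rcases mul_eq_zero.1 hx with h | h
    · obtain ⟨i, hi, hi0⟩ := Finset.prod_eq_zero_iff.1 h
      have a1 := hw i (x i, true)
      have a2 := hw i (x i, false)
      have : w i (x i, y i) = 0 := by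
        cases y i <;> linarith
      simp only [F]
      rw [Finset.prod_eq_zero hi this, zero_mul]
    · obtain ⟨b, _, hb⟩ := Finset.prod_eq_zero_iff.1 h
      obtain ⟨i, hi, hi0⟩ := Finset.prod_eq_zero_iff.1 hb
      have a1 := rho_nonneg U (x i, true)
      have a2 := rho_nonneg U (x i, false)
      unfold lam at hi0
      have r0 : rho U (x i, y i) = 0 := by
        cases y i <;> linarith
      have d0 : dl (o, true) (x i, y i) = 0 := by
        unfold dl
        rw [if_neg]
        intro h
        have hx' : x i = o := by simpa using congrArg Prod.fst h
        have : rho U (x i, false) = 0 := by linarith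
        rw [hx'] at this
        simp only [rho, h2, if_true] at this
        have : 0 < 1 / (U.card : ℝ) := by positivity
        linarith
      simp only [F]
      rw [Finset.prod_eq_zero (Finset.mem_univ b) (Vg_zero _ _ _ _ _ i hi d0 r0), mul_zero]
  have eT : Tot (dl (o, true)) (rho U) lab w t χ = ∑ x, φ x * ∑ y, F x y * ψ y x := by
    unfold Tot
    rw [sum_split]
    refine Finset.sum_congr rfl fun x _ => ?_
    rw [Finset.mul_sum]
    refine Finset.sum_congr rfl fun y _ => ?_
    rw [hχφ]
    simp only [F]
    ring
  rw [eT]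
  have cs := Finset.sum_sq_le_sum_mul_sum_of_sq_le_mul (R := ℝ) (univ : Finset (ι → β))
    (r := fun x => φ x * ∑ y, F x y * ψ y x) (f := Lam)
    (g := fun x => (∑ y, F x y * ψ y x) ^ 2 / Lam x)
    (fun x _ => hLam x) (fun x _ => div_nonneg (sq_nonneg _) (hLam x))
    (fun x _ => by
      by_cases hx : Lam x = 0
      · simp [hF0 x hx]
      · rw [mul_div_cancel₀ _ hx, mul_pow]
        have : φ x ^ 2 ≤ 1 := by
          rw [← sq_abs]; exact pow_le_one₀ (abs_nonneg _) (hφ x)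
        exact mul_le_of_le_one_left (sq_nonneg _) this)
  refine cs.trans ?_
  have sLam : ∑ x, Lam x = ∏ i ∈ fib lab none, ∑ x, w i x := by
    have : ∀ x : ι → β, Lam x = ∏ i, (if lab i = none then w i (x i, true) + w i (x i, false)
        else lam U (x i)) := by
      intro x
      rw [prod_opt lab]
      simp only [Lam]
      congr 1
      · refine Finset.prod_congr rfl fun i hi => ?_
        rw [if_pos ((mem_fib _ _ _).1 hi)]
      · refine Finset.prod_congr rfl fun b _ => Finset.prod_congr rfl fun i hi => ?_
        rw [if_neg]
        rw [(mem_fib _ _ _).1 hi]; simp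
    simp only [this]
    rw [prod_ite_sum (fun i c => if lab i = none then w i (c, true) + w i (c, false) else lam U c),
      prod_opt lab]
    rw [Finset.prod_eq_one (s := (univ : Finset μ)), mul_one]
    · refine Finset.prod_congr rfl fun i hi => ?_
      rw [Fintype.sum_prod_type]
      refine Finset.sum_congr rfl fun x _ => ?_
      rw [if_pos ((mem_fib _ _ _).1 hi), Fintype.sum_bool]
    · intro b _
      refine Finset.prod_eq_one fun i hi => ?_
      rw [← sum_lam U hU]
      refine Finset.sum_congr rfl fun x _ => ?_
      rw [if_neg]
      rw [(mem_fib _ _ _).1 hi]; simp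
  have eg : ∀ x, (∑ y, F x y * ψ y x) ^ 2 / Lam x = ∑ z : ι → Bool × Bool,
      (∏ i ∈ fib lab none, wk (w i) (x i) (z i)) *
      (∏ b, Vg (dl (o, true)) (rho U) (fib lab (some b)) (t b) (fun i => (x i, (z i).1)) *
        Vg (dl (o, true)) (rho U) (fib lab (some b)) (t b) (fun i => (x i, (z i).2)) /
        (∏ i ∈ fib lab (some b), lam U (x i))) *
      (ψ (fun i => (z i).1) x * ψ (fun i => (z i).2) x) := by
    intro x
    rw [sum_split, sq, Finset.sum_mul_sum, Finset.sum_div]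
    refine Finset.sum_congr rfl fun y _ => ?_
    rw [Finset.sum_div]
    refine Finset.sum_congr rfl fun y' _ => ?_
    simp only [wk, F, Lam, Finset.prod_div_distrib, Finset.prod_mul_distrib]
    rw [div_mul_div_comm]
    ring
  have sg : ∑ x, (∑ y, F x y * ψ y x) ^ 2 / Lam x ≤
      (∏ i ∈ fib lab none, ∑ x, w i x) * ∏ b, fC C (fib lab (some b)).card ^ 2 := by
    simp only [eg]
    rw [Finset.sum_comm]
    have b1 : ∀ z : ι → Bool × Bool, ∑ x : ι → β, (∏ i ∈ fib lab none, wk (w i) (x i) (z i)) *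
      (∏ b, Vg (dl (o, true)) (rho U) (fib lab (some b)) (t b) (fun i => (x i, (z i).1)) *
        Vg (dl (o, true)) (rho U) (fib lab (some b)) (t b) (fun i => (x i, (z i).2)) /
        (∏ i ∈ fib lab (some b), lam U (x i))) *
      (ψ (fun i => (z i).1) x * ψ (fun i => (z i).2) x) ≤
      (∏ i ∈ fib lab none, ∑ x, wk (w i) x (z i)) *
        ∏ b, gam C' (tau U) (pb U) (nb U o) (fib lab (some b)) (t b) z := fun z =>
      (le_abs_self _).trans (fixed_z U o h1 h2 hU' cyl C' hPG lab (fun i x => wk (w i) x (z i)) _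
        (fun i x => wk_nonneg _ (hw i) _ _) (hψ _ _) t ht0 z)
    refine (Finset.sum_le_sum fun z _ => b1 z).trans ?_
    let g : ∀ ob : Option μ, ({i // lab i = ob} → Bool × Bool) → ℝ := fun ob => match ob with
      | none => fun z => ∏ i, ∑ x, wk (w i.1) x (z i)
      | some b => fun z => gam C' (tau U) (pb U) (nb U o) univ (t b) z
    have e1 : ∀ z : ι → Bool × Bool, (∏ i ∈ fib lab none, ∑ x, wk (w i) x (z i)) *
        (∏ b, gam C' (tau U) (pb U) (nb U o) (fib lab (some b)) (t b) z) =
        ∏ ob, g ob (fun i => z i) := by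
      intro z
      rw [Fintype.prod_option]
      congr 1
      · exact Finset.prod_subtype _ (mem_fib lab none) _
      · exact Finset.prod_congr rfl fun b _ => gam_subtype _ _ _ _ _ _ _ _ (mem_fib lab (some b))
    simp only [e1]
    rw [factor lab g, Fintype.prod_option]
    have e2 : ∑ y, g none y = ∏ i ∈ fib lab none, ∑ x, w i x := by
      rw [Finset.prod_subtype _ (mem_fib lab none)]
      simp only [g]
      rw [prod_ite_sum (fun (i : {i // lab i = none}) c => ∑ x, wk (w i.1) x c)]
      exact Finset.prod_congr rfl fun i _ => sum_wk _
    rw [e2]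
    refine mul_le_mul_of_nonneg_left ?_ hm
    refine Finset.prod_le_prod (fun b _ => Finset.sum_nonneg fun z _ => ?_) (fun b _ => ?_)
    · simp only [g]
      have pbn : ∀ c, 0 ≤ pb U c := fun c => Finset.sum_nonneg fun x _ => pk_nonneg _ _ _
      have nbn : ∀ c, 0 ≤ nb U o c := fun c => Finset.sum_nonneg fun x _ => nk_nonneg _ _ _ _
      unfold gam
      refine add_nonneg (mul_nonneg (Finset.prod_nonneg fun j _ => pbn _)
        (Finset.prod_nonneg fun s _ => ?_)) (mul_nonneg (sq_nonneg _) ?_)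
      · unfold Fg
        have := div_nonneg (ht0 b) hτ.le
        positivity
      · unfold Dg
        refine Finset.sum_nonneg fun i _ => Finset.prod_nonneg fun j _ => ?_
        split_ifs
        · exact nbn _
        · exact pbn _
    · have htb := ht b
      rw [card_fib] at htb ⊢
      simp only [g, htb]
      exact block_bound C C' (tau U) U.card s hC' hτ hs (pb U) (nb U o)
        (fun c => Finset.sum_nonneg fun x _ => pk_nonneg _ _ _) (sum_pb U hU)
        (fun c hc => pb_tag U hU' c hc) (sum_nb U o) hC
  rw [sLam]
  refine (mul_le_mul_of_nonneg_left sg hm).trans (le_of_eq ?_)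
  rw [Finset.prod_pow]
  ring

end XD

open Finset

namespace XD

lemma transport {β β' : Type} [DecidableEq β] [Fintype β] [DecidableEq β'] [Fintype β']
    (e : β ≃ β') (U : Finset β) (o : β) (cyl : ∀ ι : Type, ((ι → β) → ℝ) → Prop)
    (cyl' : ∀ ι : Type, ((ι → β') → ℝ) → Prop) (C : ℝ)
    (hc : ∀ ι χ, cyl ι χ → cyl' ι (fun X' => χ (fun i => e.symm (X' i))))
    (h : PP (U.map e.toEmbedding) (e o) cyl' C) : PP U o cyl C := by
  intro ι μ _ _ _ _ lab w t χ hw hχ ht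
  have key := h ι μ lab (fun i x' => w i (e.symm x')) t _ (fun i x => hw i _) (hc ι χ hχ) ht
  have d1 : ∀ x', dl (e o) x' = dl o (e.symm x') := by
    intro x'
    unfold dl
    congr 1
    rw [Equiv.symm_apply_eq]
  have r1 : ∀ x', rho (U.map e.toEmbedding) x' = rho U (e.symm x') := by
    intro x'
    unfold rho
    simp [Finset.mem_map_equiv]
  have v1 : ∀ (R : Finset ι) (t : ℝ) (X' : ι → β'), Vg (dl (e o)) (rho (U.map e.toEmbedding)) R t X' =
      Vg (dl o) (rho U) R t (fun i => e.symm (X' i)) := by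
    intro R t X'
    unfold Vg
    simp only [d1, r1]
  have s1 : ∀ i, ∑ x', w i (e.symm x') = ∑ x, w i x := fun i => Equiv.sum_comp e.symm (w i)
  have t1 : Tot (dl (e o)) (rho (U.map e.toEmbedding)) lab (fun i x' => w i (e.symm x')) t
      (fun X' => χ (fun i => e.symm (X' i))) = Tot (dl o) (rho U) lab w t χ := by
    unfold Tot
    simp only [v1]
    exact Equiv.sum_comp (Equiv.piCongrRight (fun _ : ι => e.symm)) (fun X : ι → β =>
      (∏ i ∈ fib lab none, w i (X i)) *
      (∏ b, Vg (dl o) (rho U) (fib lab (some b)) (t b) X) * χ X)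
  rw [t1] at key
  simpa only [s1] using key

def oK (K : Type) : K → Bool := fun _ => true

/-- cylinder intersections -/
def cylS {K : Type} (S : Finset K) (ι : Type) (χ : (ι → K → Bool) → ℝ) : Prop :=
  ∃ φ : K → (ι → K → Bool) → ℝ, (∀ j ∈ S, ∀ X, |φ j X| ≤ 1) ∧
    (∀ j ∈ S, ∀ X Y, (∀ i j', j' ≠ j → X i j' = Y i j') → φ j X = φ j Y) ∧
    ∀ X, χ X = ∏ j ∈ S, φ j X

def Good {K : Type} (S : Finset K) (U : Finset (K → Bool)) : Prop :=
  oK K ∉ U ∧ ∀ u, u ≠ oK K → (∀ i, i ∉ S → u i = true) → u ∈ U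

lemma Good_card {K : Type} [DecidableEq K] (S : Finset K) (U : Finset (K → Bool))
    (h : Good S U) : 2 ^ S.card - 1 ≤ U.card := by
  have : (S.powerset.erase ∅).card = 2 ^ S.card - 1 := by
    rw [Finset.card_erase_of_mem (by simp), Finset.card_powerset]
  rw [← this]
  refine Finset.card_le_card_of_injOn (fun T i => decide (i ∉ T)) ?_ ?_
  · intro T hT
    simp only [Finset.coe_erase, Set.mem_diff, Finset.mem_coe, Finset.mem_powerset,
      Set.mem_singleton_iff] at hT
    apply h.2
    · intro he
      apply hT.2
      ext i
      have := congrFun he i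
      simpa [oK] using this
    · intro i hi
      have : i ∉ T := fun hh => hi (hT.1 hh)
      simp [this]
  · intro T _ T' _ he
    ext i
    have := congrFun he i
    simp at this
    tauto

/-- splitting off column `j` -/
def spl {K : Type} [DecidableEq K] (j : K) : (K → Bool) ≃ ({i // i ≠ j} → Bool) × Bool where
  toFun u := (fun i => u i, u j)
  invFun p i := if h : i = j then p.2 else p.1 ⟨i, h⟩
  left_inv u := by
    funext i
    by_cases h : i = j
    · subst h; simp
    · simp [h]
  right_inv p := by
    ext i
    · simp [i.2]
    · simp

lemma spl_symm_ne {K : Type} [DecidableEq K] (j : K) (p) (i : K) (h : i ≠ j) :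
    (spl j).symm p i = p.1 ⟨i, h⟩ := by simp [spl, h]

lemma spl_symm_eq {K : Type} [DecidableEq K] (j : K) (p) :
    (spl j).symm p j = p.2 := by simp [spl]

lemma spl_o {K : Type} [DecidableEq K] (j : K) : spl j (oK K) = (oK {i // i ≠ j}, true) := rfl

lemma spl_h1 {K : Type} [DecidableEq K] (j : K) (S : Finset K) (U : Finset (K → Bool))
    (h : Good S U) : (oK {i // i ≠ j}, true) ∉ U.map (spl j).toEmbedding := by
  rw [← spl_o, Finset.mem_map_equiv]
  simpa using h.1

lemma spl_mem {K : Type} [DecidableEq K] (j : K) (S : Finset K) (hj : j ∈ S) (U : Finset (K → Bool))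
    (h : Good S U) (p : ({i // i ≠ j} → Bool) × Bool) (hp : p ≠ (oK _, true))
    (h2 : ∀ i : {i // i ≠ j}, i.1 ∉ S → p.1 i = true) :
    p ∈ U.map (spl j).toEmbedding := by
  rw [Finset.mem_map_equiv]
  apply h.2
  · intro he
    apply hp
    rw [← spl_o, ← he, Equiv.apply_symm_apply]
  · intro i hi
    have : i ≠ j := by rintro rfl; exact hi hj
    rw [spl_symm_ne j p i this]
    exact h2 ⟨i, this⟩ hi

lemma spl_h2 {K : Type} [DecidableEq K] (j : K) (S : Finset K) (hj : j ∈ S) (U : Finset (K → Bool))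
    (h : Good S U) : (oK {i // i ≠ j}, false) ∈ U.map (spl j).toEmbedding :=
  spl_mem j S hj U h _ (by simp) (fun i _ => rfl)

lemma col_base {K : Type} [Fintype K] [DecidableEq K] (j : K) (U : Finset (K → Bool))
    (h : Good {j} U) : PP U (oK K) (cylS {j}) ((U.card : ℝ) - 1) := by
  refine transport (spl j) U (oK K) (cylS {j}) (fun ι χ' => ∃ χ, cylS {j} ι χ ∧
    χ' = fun X' => χ (fun i => (spl j).symm (X' i))) _ (fun ι χ hχ => ⟨χ, hχ, rfl⟩) ?_
  have hb := base (U.map (spl j).toEmbedding) (oK {i // i ≠ j}) (spl_h1 j {j} U h)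
    (spl_h2 j {j} (by simp) U h) (fun ι χ' => ∃ χ, cylS {j} ι χ ∧
    χ' = fun X' => χ (fun i => (spl j).symm (X' i))) (by
      rintro ι _ ⟨χ, ⟨φ, a1, a2, a3⟩, rfl⟩
      refine ⟨fun x => φ j (fun i => (spl j).symm (x i, true)), fun x => a1 j (by simp) _, ?_⟩
      intro X
      simp only [a3, Finset.prod_singleton]
      apply a2 j (by simp)
      intro i j' hj'
      rw [spl_symm_ne _ _ _ hj', spl_symm_ne _ _ _ hj'])
  rw [Finset.card_map] at hb
  exact hb

def Sp {K : Type} [DecidableEq K] (j : K) (S : Finset K) : Finset {i // i ≠ j} :=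
  S.subtype (fun i => i ≠ j)

lemma Sp_card {K : Type} [DecidableEq K] (j : K) (S : Finset K) (hj : j ∈ S) :
    (Sp j S).card + 1 = S.card := by
  unfold Sp
  rw [Finset.card_subtype, Finset.filter_ne', Finset.card_erase_add_one hj]

lemma Sp_good {K : Type} [Fintype K] [DecidableEq K] (j : K) (S : Finset K) (hj : j ∈ S)
    (U : Finset (K → Bool)) (h : Good S U) : Good (Sp j S) (Up (U.map (spl j).toEmbedding)) := by
  constructor
  · intro hm
    exact spl_h1 j S U h (Finset.mem_filter.1 hm).2.1
  · intro u hu h2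
    have h3 : ∀ i : {i // i ≠ j}, i.1 ∉ S → u i = true := by
      intro i hi
      apply h2
      simpa [Sp] using hi
    refine Finset.mem_filter.2 ⟨Finset.mem_univ _, ?_, ?_⟩
    · exact spl_mem j S hj U h _ (fun he => hu (congrArg Prod.fst he)) h3
    · exact spl_mem j S hj U h _ (by simp) h3

lemma Sp_prod {K : Type} [DecidableEq K] (j : K) (S : Finset K) (hj : j ∈ S) (f : K → ℝ) :
    ∏ i ∈ S, f i = f j * ∏ i ∈ Sp j S, f i.1 := by
  rw [← Finset.mul_prod_erase S f hj]
  congr 1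
  refine (Finset.prod_bij (fun (i : {i // i ≠ j}) _ => i.1) ?_ ?_ ?_ ?_).symm
  · intro i hi
    simp only [Sp, Finset.mem_subtype] at hi
    exact Finset.mem_erase.2 ⟨i.2, hi⟩
  · intro i _ i' _ h; exact Subtype.ext h
  · intro i hi
    obtain ⟨a, b⟩ := Finset.mem_erase.1 hi
    exact ⟨⟨i, a⟩, by simpa [Sp] using b, rfl⟩
  · intro i _; rfl

lemma col_step {K : Type} [Fintype K] [DecidableEq K] (j : K) (S : Finset K) (hj : j ∈ S)
    (U : Finset (K → Bool)) (h : Good S U) (C' C s : ℝ)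
    (hPP : PP (Up (U.map (spl j).toEmbedding)) (oK _) (cylS (Sp j S)) C')
    (hne : (Up (U.map (spl j).toEmbedding)).Nonempty) (hC' : 0 ≤ C') (hs : 0 < s)
    (hC : (U.card : ℝ) + (2 * U.card / (Up (U.map (spl j).toEmbedding)).card) *
      ((1 + s) * C' + 1 + 1 / s) ≤ C) :
    PP U (oK K) (cylS S) C := by
  refine transport (spl j) U (oK K) (cylS S) (fun ι χ' => ∃ χ, cylS S ι χ ∧
    χ' = fun X' => χ (fun i => (spl j).symm (X' i))) _ (fun ι χ hχ => ⟨χ, hχ, rfl⟩) ?_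
  refine step (U.map (spl j).toEmbedding) (oK {i // i ≠ j}) (spl_h1 j S U h)
    (spl_h2 j S hj U h) hne (cylS (Sp j S)) C' C s (PP_PG hC' hne hPP) hC' hs ?_ _ ?_
  · unfold tau
    rw [one_div_div, Finset.card_map]
    exact hC
  · rintro ι _ ⟨χ, ⟨φ, a1, a2, a3⟩, rfl⟩
    refine ⟨fun x => φ j (fun i => (spl j).symm (x i, true)),
      fun y x => ∏ j' ∈ Sp j S, φ j'.1 (fun i => (spl j).symm (x i, y i)),
      fun x => a1 j hj _, ?_, ?_⟩
    · intro y y'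
      refine ⟨fun j' x => φ j'.1 (fun i => (spl j).symm (x i, y i)) *
        φ j'.1 (fun i => (spl j).symm (x i, y' i)), ?_, ?_, ?_⟩
      · intro j' hj' x
        have hj2 : j'.1 ∈ S := by simpa [Sp] using hj'
        rw [abs_mul]
        exact mul_le_one₀ (a1 _ hj2 _) (abs_nonneg _) (a1 _ hj2 _)
      · intro j' hj' X Y hXY
        have hj2 : j'.1 ∈ S := by simpa [Sp] using hj'
        have gen : ∀ y : ι → Bool, φ j'.1 (fun i => (spl j).symm (X i, y i)) =
            φ j'.1 (fun i => (spl j).symm (Y i, y i)) := by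
          intro y
          apply a2 _ hj2
          intro i i' hi'
          by_cases hij : i' = j
          · subst hij
            rw [spl_symm_eq, spl_symm_eq]
          · rw [spl_symm_ne _ _ _ hij, spl_symm_ne _ _ _ hij]
            exact hXY i ⟨i', hij⟩ (fun he => hi' (congrArg Subtype.val he))
        simp only [gen]
      · intro X
        rw [Finset.prod_mul_distrib]
    · intro X
      simp only [a3]
      rw [Sp_prod j S hj]
      congr 1
      apply a2 j hj
      intro i j' hj'
      rw [spl_symm_ne _ _ _ hj', spl_symm_ne _ _ _ hj']

noncomputable def Cc (l : ℕ) (N : ℝ) : ℝ := if l = 1 then N - 1 else N * (4 * 2 ^ l - 11)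

lemma num1 (N N' : ℝ) (_ : 0 ≤ N) (h : 1 ≤ N') :
    N + 2 * N / N' * ((1 + 1) * Cc 1 N' + 1 + 1 / 1) ≤ Cc (1 + 1) N := by
  simp only [Cc]
  norm_num
  apply le_of_eq
  have : N' ≠ 0 := by linarith
  field_simp
  ring

lemma num2 (N N' M : ℝ) (hN : 0 ≤ N) (hM3 : 3 ≤ M) (h : M ≤ N') :
    N + 2 * N / N' * ((1 + 1 / (2 * M)) * (N' * (4 * (M + 1) - 11)) + 1 +
            1 / (1 / (2 * M))) ≤ N * (8 * (M + 1) - 11) := by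
  have hM : 0 < M := by linarith
  have hN' : 0 < N' := by linarith
  have e2 : N + 2 * N / N' * ((1 + 1 / (2 * M)) * (N' * (4 * (M + 1) - 11)) + 1 +
            1 / (1 / (2 * M))) = N * (1 + 2 * (4 * M - 7) + (4 - 7 / M) + 2 * (1 + 2 * M) / N') := by
    field_simp
    ring
  rw [e2]
  apply mul_le_mul_of_nonneg_left _ hN
  have e3 : 2 * (1 + 2 * M) / N' ≤ 14 / 3 := by
    rw [div_le_iff₀ (by linarith)]
    nlinarith
  have e4 : 0 ≤ 7 / M := by positivity
  linarith

lemma col (l : ℕ) (hl : 1 ≤ l) : ∀ (K : Type) [Fintype K] [DecidableEq K] (S : Finset K)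
    (U : Finset (K → Bool)), S.card = l → Good S U → PP U (oK K) (cylS S) (Cc l U.card) := by
  induction l, hl using Nat.le_induction with
  | base =>
    intro K _ _ S U hS hG
    obtain ⟨j, rfl⟩ := Finset.card_eq_one.1 hS
    simpa [Cc] using col_base j U hG
  | succ l hl ih =>
    intro K _ _ S U hS hG
    obtain ⟨j, hj⟩ := Finset.card_pos.1 (show 0 < S.card by omega)
    have hS' : (Sp j S).card = l := by have := Sp_card j S hj; omega
    have hG' := Sp_good j S hj U hG
    have hP := ih _ (Sp j S) _ hS' hG'
    have hcard := Good_card _ _ hG'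
    rw [hS'] at hcard
    have h2l : 2 ≤ 2 ^ l := by
      calc 2 = 2 ^ 1 := rfl
        _ ≤ 2 ^ l := Nat.pow_le_pow_right (by norm_num) hl
    have hne : (Up (U.map (spl j).toEmbedding)).Nonempty := by
      rw [← Finset.card_pos]; omega
    have hcR : (2 : ℝ) ^ l - 1 ≤ ((Up (U.map (spl j).toEmbedding)).card : ℝ) := by
      have : 2 ^ l ≤ (Up (U.map (spl j).toEmbedding)).card + 1 := by omega
      have : ((2 ^ l : ℕ) : ℝ) ≤ (Up (U.map (spl j).toEmbedding)).card + 1 := by exact_mod_cast this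
      push_cast at this
      linarith
    have hN1 : (1 : ℝ) ≤ ((Up (U.map (spl j).toEmbedding)).card : ℝ) := by
      exact_mod_cast Finset.card_pos.2 hne
    generalize hN' : ((Up (U.map (spl j).toEmbedding)).card : ℝ) = N' at hcR hN1 hP
    have hN : (0 : ℝ) ≤ (U.card : ℝ) := by positivity
    by_cases h1 : l = 1
    · subst h1
      refine col_step j S hj U hG _ _ 1 hP hne ?_ one_pos ?_
      · simp [Cc]; linarith
      · rw [hN']
        exact num1 _ _ hN hN1
    · have hl2 : 2 ≤ l := by omega
      have h4 : (4 : ℝ) ≤ 2 ^ l := by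
        calc (4 : ℝ) = 2 ^ 2 := by norm_num
          _ ≤ 2 ^ l := pow_le_pow_right₀ (by norm_num) hl2
      have c1 : Cc l N' = N' * (4 * 2 ^ l - 11) := by simp [Cc, h1]
      have c2 : Cc (l + 1) U.card = U.card * (8 * 2 ^ l - 11) := by
        have : l + 1 ≠ 1 := by omega
        simp only [Cc, this, if_false, pow_succ]; ring
      rw [c1] at hP
      rw [c2]
      set M : ℝ := 2 ^ l - 1 with hM
      have hM3 : 3 ≤ M := by rw [hM]; linarith
      refine col_step j S hj U hG _ _ (1 / (2 * M)) hP hne ?_ (by positivity) ?_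
      · apply mul_nonneg (by linarith); linarith
      · rw [hN']
        have e1 : (2 : ℝ) ^ l = M + 1 := by rw [hM]; ring
        rw [e1]
        exact num2 _ _ _ hN hM3 hcR

lemma col' (l : ℕ) (hl : 1 ≤ l) (K : Type) [Fintype K] [DecidableEq K] (S : Finset K)
    (U : Finset (K → Bool)) (hS : S.card = l) (hG : Good S U) :
    ∃ C : ℝ, C ≤ 4 * U.card * (2 ^ l - 1) ∧ PP U (oK K) (cylS S) C := by
  refine ⟨Cc l (U.card : ℝ), ?_, col l hl K S U hS hG⟩
  have hN : (0 : ℝ) ≤ (U.card : ℝ) := by positivity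
  unfold Cc
  split_ifs with h
  · subst h; norm_num; linarith
  · nlinarith

end XD

namespace XD

def Uk (k l : ℕ) : Finset (Fin k → Bool) :=
  Finset.univ.filter (fun v : Fin k → Bool => k - l ≤ wt v ∧ wt v ≤ k - 1)

lemma rowWt_eq (k l : ℕ) (u : Fin k → Bool) : rowWtL k l u = rho (Uk k l) u := by
  unfold rowWtL rho Uk
  simp only [Finset.mem_filter, Finset.mem_univ, true_and]

lemma wt_zeros {k : ℕ} (u : Fin k → Bool) :
    wt u + (Finset.univ.filter (fun j => u j = false)).card = k := by
  unfold wt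
  have := Finset.card_filter_add_card_filter_not (s := (univ : Finset (Fin k))) (fun j => u j = true)
  simpa using this

lemma wt_o (k : ℕ) : wt (oK (Fin k)) = k := by simp [wt, oK]

lemma o_notMem (k l : ℕ) (hk : 1 ≤ k) : oK (Fin k) ∉ Uk k l := by
  simp only [Uk, Finset.mem_filter, Finset.mem_univ, true_and, wt_o]
  omega

lemma Uk_good (k l : ℕ) (hk : 1 ≤ k) (S : Finset (Fin k)) (hS : S.card = l) :
    Good S (Uk k l) := by
  refine ⟨o_notMem k l hk, ?_⟩
  intro u hu h
  have hz := wt_zeros u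
  have h1 : (Finset.univ.filter (fun j => u j = false)).card ≤ S.card := by
    apply Finset.card_le_card
    intro j hj
    by_contra hjS
    have := h j hjS
    simp [this] at hj
  have h2 : 0 < (Finset.univ.filter (fun j => u j = false)).card := by
    rw [Finset.card_pos]
    by_contra hne
    apply hu
    funext j
    rw [Finset.not_nonempty_iff_eq_empty, Finset.filter_eq_empty_iff] at hne
    have := hne (Finset.mem_univ j)
    simpa [oK] using this
  simp only [Uk, Finset.mem_filter, Finset.mem_univ, true_and]
  omega

lemma Uk_card (k l : ℕ) (hk : 1 ≤ k) (hlk : l ≤ k) :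
    (Uk k l).card ≤ ∑ i ∈ Finset.Icc 1 l, k.choose i := by
  have h1 : (Uk k l).card ≤ ((Finset.Icc 1 l).biUnion
      (fun i => Finset.powersetCard i (univ : Finset (Fin k)))).card := by
    refine Finset.card_le_card_of_injOn (fun u => Finset.univ.filter (fun j => u j = false)) ?_ ?_
    · intro u hu
      have hz := wt_zeros u
      simp only [Uk, Finset.coe_filter, Finset.mem_univ, true_and, Set.mem_setOf_eq] at hu
      simp only [Finset.coe_biUnion, Set.mem_iUnion, Finset.mem_coe, Finset.mem_powersetCard,
        Finset.mem_Icc]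
      exact ⟨_, ⟨by omega, by omega⟩, Finset.subset_univ _, rfl⟩
    · intro u _ v _ huv
      funext j
      have := congrArg (fun T => j ∈ T) huv
      simp at this
      cases hu : u j <;> cases hv : v j <;> simp_all
  refine h1.trans (Finset.card_biUnion_le.trans (le_of_eq ?_))
  simp

lemma sig_eq (n k l : ℕ) (hk : 1 ≤ k) (X : Fin n → Fin k → Bool) :
    (if DISJ n k X = true then (-1 : ℝ) else 1) * sigmaL n k l X =
      (1 / 2) * Vg (dl (oK (Fin k))) (rho (Uk k l)) univ (1 / (n : ℝ)) X := by
  have hdl : ∀ u : Fin k → Bool, dl (oK (Fin k)) u = if ∀ j, u j = true then 1 else 0 := by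
    intro u
    unfold dl
    congr 1
    rw [funext_iff]; rfl
  have hV : Vg (dl (oK (Fin k))) (rho (Uk k l)) univ (1 / (n : ℝ)) X =
      sigma1L n k l X - sigma0L n k l X := by
    unfold Vg sigma1L sigma0L
    simp only [rowWt_eq]
    congr 2
    refine Finset.sum_congr rfl fun i _ => ?_
    rw [← Finset.mul_prod_erase univ _ (Finset.mem_univ i), if_pos rfl, hdl]
    have : ∏ x ∈ univ.erase i, (if x = i then dl (oK (Fin k)) (X x) else rho (Uk k l) (X x)) =
        ∏ x ∈ univ.erase i, rho (Uk k l) (X x) := by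
      refine Finset.prod_congr rfl fun j hj => ?_
      rw [if_neg (Finset.mem_erase.1 hj).1]
    rw [this]
    split_ifs <;> simp
  rw [hV]
  unfold sigmaL
  by_cases h : DISJ n k X = true
  · have h' : ∀ i, ∃ j, X i j = false := by simpa [DISJ] using h
    have s1 : sigma1L n k l X = 0 := by
      unfold sigma1L
      rw [Finset.sum_eq_zero, mul_zero]
      intro i _
      rw [if_neg]
      intro hi
      obtain ⟨j, hj⟩ := h' i
      rw [hi j] at hj
      exact absurd hj (by simp)
    rw [if_pos h, s1]; ring
  · have h' : ∃ i, ∀ j, X i j = true := by simpa [DISJ] using h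
    obtain ⟨i, hi⟩ := h'
    have hi' : X i = oK (Fin k) := funext hi
    have s0 : sigma0L n k l X = 0 := by
      unfold sigma0L
      apply Finset.prod_eq_zero (Finset.mem_univ i)
      rw [rowWt_eq, hi', rho, if_neg (o_notMem k l hk)]
    rw [if_neg h, s0]; ring

lemma sign_eq {m : ℕ} (p : Fin m → Bool) :
    (if decide ((Finset.univ.filter (fun i : Fin m => p i = true)).card % 2 = 1) = true
      then (-1 : ℝ) else 1) = ∏ i, (if p i = true then (-1 : ℝ) else 1) := by
  rw [Finset.prod_ite, Finset.prod_const, Finset.prod_const_one, mul_one]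
  generalize (Finset.univ.filter (fun i : Fin m => p i = true)).card = c
  rcases Nat.even_or_odd c with h | h
  · rw [h.neg_one_pow, if_neg]
    have := Nat.even_iff.1 h
    simp [this]
  · rw [h.neg_one_pow, if_pos]
    simpa using Nat.odd_iff.1 h

lemma fib_sigma {m : ℕ} (nn : Fin m → ℕ) (b : Fin m) :
    fib (fun p : (Σ i : Fin m, Fin (nn i)) => some p.1) (some b) =
      univ.map (Function.Embedding.sigmaMk b) := by
  ext ⟨i, a⟩
  simp only [fib, Finset.mem_filter, Finset.mem_univ, true_and, Option.some.injEq, Finset.mem_map,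
    Function.Embedding.sigmaMk_apply]
  constructor
  · rintro rfl; exact ⟨a, rfl⟩
  · rintro ⟨a', h⟩; exact (congrArg Sigma.fst h).symm

lemma Vg_map {ι ι' β : Type} [DecidableEq ι] [DecidableEq ι'] (d r : β → ℝ) (f : ι' ↪ ι)
    (R : Finset ι') (t : ℝ) (X : ι → β) :
    Vg d r (R.map f) t X = Vg d r R t (fun i => X (f i)) := by
  unfold Vg
  simp only [Finset.prod_map, Finset.sum_map, f.injective.eq_iff]

lemma main_bound (m k l : ℕ) (hl : 1 ≤ l) (hlk : l ≤ k)
    (nn : Fin m → ℕ) (hnn : ∀ i, 1 ≤ nn i) (S : Finset (Fin k)) (hS : S.card ≤ l)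
    (χ : (∀ i, Fin (nn i) → Fin k → Bool) → ℝ) (hχ : IsCylinderT nn k S χ) :
    |∑ X : ∀ i, Fin (nn i) → Fin k → Bool,
      (∏ i, Vg (dl (oK (Fin k))) (rho (Uk k l)) univ (1 / (nn i : ℝ)) (X i)) * χ X| ≤
    ∏ i, Real.sqrt (4 * ((Uk k l).card) * (2 ^ l - 1) / (nn i : ℝ)) := by
  obtain ⟨S', hSS', hS'⟩ := Finset.exists_superset_card_eq hS (by simpa using hlk)
  obtain ⟨C, hC, hP⟩ := col' l hl (Fin k) S' (Uk k l) hS' (Uk_good k l (hl.trans hlk) S' hS')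
  obtain ⟨φ, a1, a2, a3⟩ := hχ
  let cur : ((Σ i : Fin m, Fin (nn i)) → Fin k → Bool) → (∀ i, Fin (nn i) → Fin k → Bool) :=
    fun X i a => X ⟨i, a⟩
  have hcard : ∀ b, (fib (fun p : (Σ i : Fin m, Fin (nn i)) => some p.1) (some b)).card = nn b := by
    intro b; rw [fib_sigma]; simp
  have hnone : fib (fun p : (Σ i : Fin m, Fin (nn i)) => some p.1) none = ∅ := by
    simp [fib]
  have key := hP (Σ i : Fin m, Fin (nn i)) (Fin m) (fun p => some p.1) (fun _ _ => 0)
    (fun b => 1 / (nn b : ℝ)) (fun X => χ (cur X)) (fun _ _ => le_rfl)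
    (by
      refine ⟨fun j X => if j ∈ S then φ j (cur X) else 1, ?_, ?_, ?_⟩
      · intro j _ X
        by_cases hj : j ∈ S
        · simp only [if_pos hj]
          rcases a1 j hj (cur X) with h | h <;> simp [h]
        · simp [hj]
      · intro j _ X Y hXY
        by_cases hj : j ∈ S
        · simp only [if_pos hj]
          exact a2 j hj _ _ (fun i i' j' hj' => hXY ⟨i, i'⟩ j' hj')
        · simp [hj]
      · intro X
        show χ (cur X) = ∏ j ∈ S', (if j ∈ S then φ j (cur X) else 1)
        rw [a3]
        rw [← Finset.prod_subset hSS' (f := fun j => if j ∈ S then φ j (cur X) else 1)]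
        · exact Finset.prod_congr rfl fun j hj => by simp [hj]
        · intro j _ hj; simp [hj])
    (by intro b; simp only [hcard])
  unfold Tot at key
  simp only [hnone, Finset.prod_empty, one_mul, hcard, fib_sigma, Vg_map,
    Function.Embedding.sigmaMk_apply, Finset.card_map, Finset.card_univ,
    Fintype.card_fin] at key
  have e : ∑ X : ∀ i, Fin (nn i) → Fin k → Bool,
      (∏ i, Vg (dl (oK (Fin k))) (rho (Uk k l)) univ (1 / (nn i : ℝ)) (X i)) * χ X =
      ∑ X : (Σ i : Fin m, Fin (nn i)) → Fin k → Bool,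
      (∏ i, Vg (dl (oK (Fin k))) (rho (Uk k l)) univ (1 / (nn i : ℝ)) (fun a => X ⟨i, a⟩)) *
        χ (cur X) :=
    (Equiv.sum_comp (Equiv.piCurry (fun (i : Fin m) (_ : Fin (nn i)) => Fin k → Bool))
      (fun X : ∀ i, Fin (nn i) → Fin k → Bool =>
        (∏ i, Vg (dl (oK (Fin k))) (rho (Uk k l)) univ (1 / (nn i : ℝ)) (X i)) * χ X)).symm
  rw [e]
  refine key.trans (Finset.prod_le_prod (fun b _ => ?_) (fun b _ => ?_))
  · unfold fC; split_ifs <;> positivity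
  · have hb := hnn b
    rw [fC, if_neg (by omega)]
    apply Real.sqrt_le_sqrt
    exact div_le_div_of_nonneg_right hC (by positivity)

lemma sqrt_pow_eq (a : ℝ) (ha : 0 ≤ a) (m : ℕ) : Real.sqrt a ^ m = a ^ ((m : ℝ) / 2) := by
  rw [Real.sqrt_eq_rpow, ← Real.rpow_natCast, ← Real.rpow_mul ha]
  congr 1; ring

lemma final_bound (m k l : ℕ) (hl : 1 ≤ l) (hlk : l ≤ k) (nn : Fin m → ℕ) :
    (1 / 2) ^ m * ∏ i, Real.sqrt (4 * ((Uk k l).card) * (2 ^ l - 1) / (nn i : ℝ)) ≤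
    ((2 : ℝ) ^ l - 1) ^ ((m : ℝ) / 2) *
        (∑ i ∈ Finset.Icc 1 l, (k.choose i : ℝ)) ^ ((m : ℝ) / 2) /
          Real.sqrt (∏ i : Fin m, (nn i : ℝ)) := by
  have hM : (0 : ℝ) ≤ 2 ^ l - 1 := by
    have : (1 : ℝ) ≤ 2 ^ l := one_le_pow₀ (by norm_num)
    linarith
  set N' : ℝ := ∑ i ∈ Finset.Icc 1 l, (k.choose i : ℝ) with hN'
  have hN'0 : 0 ≤ N' := Finset.sum_nonneg fun i _ => by positivity
  have hN : ((Uk k l).card : ℝ) ≤ N' := by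
    have := Uk_card k l (hl.trans hlk) hlk
    rw [hN']
    exact_mod_cast this
  have e1 : ∀ i, Real.sqrt (4 * ((Uk k l).card) * (2 ^ l - 1) / (nn i : ℝ)) ≤
      2 * (Real.sqrt (2 ^ l - 1) * Real.sqrt N') / Real.sqrt (nn i) := by
    intro i
    rw [Real.sqrt_div' _ (by positivity)]
    apply div_le_div_of_nonneg_right _ (Real.sqrt_nonneg _)
    rw [← Real.sqrt_mul hM]
    have : (2 : ℝ) = Real.sqrt 4 := by
      rw [show (4 : ℝ) = 2 ^ 2 by norm_num, Real.sqrt_sq (by norm_num)]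
    nth_rewrite 2 [this]
    rw [← Real.sqrt_mul (by norm_num)]
    apply Real.sqrt_le_sqrt
    nlinarith [mul_le_mul_of_nonneg_right hN hM]
  have e2 := Finset.prod_le_prod (s := (univ : Finset (Fin m)))
    (fun i _ => Real.sqrt_nonneg _) (fun i _ => e1 i)
  refine (mul_le_mul_of_nonneg_left e2 (by positivity)).trans (le_of_eq ?_)
  rw [Finset.prod_div_distrib, Finset.prod_const, Finset.card_univ, Fintype.card_fin,
    ← sqrt_pow_eq _ hM, ← sqrt_pow_eq _ hN'0, mul_pow, mul_pow]
  have e3 : Real.sqrt (∏ i : Fin m, (nn i : ℝ)) = ∏ i, Real.sqrt (nn i : ℝ) :=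
    Real.sqrt_prod _ (fun i _ => by positivity)
  rw [e3, ← mul_div_assoc, ← mul_assoc, ← mul_pow]
  norm_num

end XD
/-- `ℓ`-discrepancy of the XOR of `m` independent set disjointness
instances under `⊗ σ_{n_i,k,ℓ}`. -/
theorem stmt_10 (m k ℓ : ℕ) (hm : 1 ≤ m) (hℓ : 1 ≤ ℓ) (hℓk : ℓ ≤ k)
    (nn : Fin m → ℕ) (hnn : ∀ i, 1 ≤ nn i) :
    discTL nn k ℓ
      (fun X => decide
        ((Finset.univ.filter (fun i : Fin m => DISJ (nn i) k (X i) = true)).card % 2 = 1))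
      (fun X => ∏ i, sigmaL (nn i) k ℓ (X i)) ≤
      ((2 : ℝ) ^ ℓ - 1) ^ ((m : ℝ) / 2) *
        (∑ i ∈ Finset.Icc 1 ℓ, (k.choose i : ℝ)) ^ ((m : ℝ) / 2) /
          Real.sqrt (∏ i : Fin m, (nn i : ℝ)) := by
  unfold discTL
  refine Real.sSup_le ?_ ?_
  · rintro _ ⟨S, χ, hS, hχ, rfl⟩
    have hk : 1 ≤ k := hℓ.trans hℓk
    refine le_trans ?_ (XD.final_bound m k ℓ hℓ hℓk nn)
    refine le_trans (le_of_eq ?_) (mul_le_mul_of_nonneg_left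
      (XD.main_bound m k ℓ hℓ hℓk nn hnn S hS χ hχ) (by positivity))
    rw [← abs_of_nonneg (show (0 : ℝ) ≤ (1 / 2) ^ m by positivity), ← abs_mul,
      Finset.mul_sum]
    refine congrArg abs (Finset.sum_congr rfl fun X _ => ?_)
    beta_reduce
    rw [XD.sign_eq (fun i => DISJ (nn i) k (X i)), ← Finset.prod_mul_distrib]
    simp only [XD.sig_eq _ k ℓ hk]
    rw [Finset.prod_mul_distrib, Finset.prod_const, Finset.card_univ, Fintype.card_fin, mul_assoc]
  · have hM : (0 : ℝ) ≤ 2 ^ ℓ - 1 := by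
      have : (1 : ℝ) ≤ 2 ^ ℓ := one_le_pow₀ (by norm_num)
      linarith
    refine div_nonneg (mul_nonneg (Real.rpow_nonneg hM _) (Real.rpow_nonneg ?_ _))
      (Real.sqrt_nonneg _)
    exact Finset.sum_nonneg fun i _ => by positivity
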